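/- arXiv:2412.15940 — 7 statements merged into one kernel-verified Lean document; each statement's English description precedes it below -/
import Mathlib

section
/- Ex-ante approximation guarantee for the Relaxed Foresight Algorithm (quadratic follower): for every leader decision x ∈ X and every integer follower optimum y at x, the leader's value obtained by the algorithm satisfies h(x*) + d_x(y*) ≤ h(x) + d_x(y) + 2·L₂·ρ. In particular, the algorithm's leader objective exceeds the optimal leader objective of the bilevel program (optimistic or pessimistic) by at most 2·L₂·ρ. -/
open Matrix BigOperators

/-- Ex-ante approximation guarantee for the Relaxed Foresight Algorithm with a
convex quadratic integer follower: the leader's value obtained by the algorithm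
exceeds the value of any bilevel-feasible leader–follower pair by at most
`2 * L₂ * ρ`, where `ρ` is an ℓ₂ proximity bound for `Q`. -/
theorem relaxed_foresight_ex_ante_guarantee
    (nx ny : ℕ) (hnx : 0 < nx) (hny : 0 < ny)
    -- leader's feasible set (nonempty)
    (X : Set (Fin nx → ℝ)) (hX : X.Nonempty)
    -- leader's objective pieces
    (h : (Fin nx → ℝ) → ℝ) (dx : (Fin ny → ℝ) → ℝ)
    -- ℓ₂ norm on the follower's space
    (norm2 : (Fin ny → ℝ) → ℝ)
    (hnorm2 : ∀ v, norm2 v = Real.sqrt (∑ i, (v i) ^ 2))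
    -- `dx` is ℓ₂-Lipschitz with constant `L2 ≥ 0`
    (L2 : ℝ) (hL2 : 0 ≤ L2)
    (hLip : ∀ a b : Fin ny → ℝ, |dx a - dx b| ≤ L2 * norm2 (a - b))
    -- follower's data: symmetric positive definite `Q`, matrix `C`, vector `c`
    (Q : Matrix (Fin ny) (Fin ny) ℝ) (hQsymm : Q.IsSymm) (hQpd : Q.PosDef)
    (C : Matrix (Fin ny) (Fin nx) ℝ) (c : Fin ny → ℝ)
    -- follower's objective
    (F : (Fin nx → ℝ) → (Fin ny → ℝ) → ℝ)
    (hF : ∀ x y, F x y = (1 / 2) * (y ⬝ᵥ Q.mulVec y) + (C.mulVec x + c) ⬝ᵥ y)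
    -- continuous minimizer of the follower's problem
    (yhat : (Fin nx → ℝ) → (Fin ny → ℝ))
    (hyhat : ∀ x, yhat x = -(Q⁻¹.mulVec (C.mulVec x + c)))
    -- integer follower optimum predicate
    (IntOpt : (Fin nx → ℝ) → (Fin ny → ℝ) → Prop)
    (hIntOpt : ∀ x y, IntOpt x y ↔
      ((∀ i, ∃ w : ℤ, y i = (w : ℝ)) ∧
        ∀ z : Fin ny → ℝ, (∀ i, ∃ w : ℤ, z i = (w : ℝ)) → F x y ≤ F x z))
    -- `ρ ≥ 0` is a proximity bound for `Q` in the ℓ₂ norm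
    (ρ : ℝ) (hρ : 0 ≤ ρ)
    (hprox : ∀ c' : Fin ny → ℝ, ∀ v : Fin ny → ℝ,
      (∀ i, ∃ w : ℤ, v i = (w : ℝ)) →
      (∀ z : Fin ny → ℝ, (∀ i, ∃ w : ℤ, z i = (w : ℝ)) →
        (1 / 2) * (v ⬝ᵥ Q.mulVec v) + c' ⬝ᵥ v ≤
          (1 / 2) * (z ⬝ᵥ Q.mulVec z) + c' ⬝ᵥ z) →
      norm2 (v + Q⁻¹.mulVec c') ≤ ρ)
    -- an integer follower optimum exists at every feasible leader decision
    (hexists : ∀ x ∈ X, ∃ y, IntOpt x y)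
    -- `x*` is leader-optimal for the follower-relaxed problem
    (xstar : Fin nx → ℝ) (hxstarX : xstar ∈ X)
    (hxstarOpt : ∀ x ∈ X, h xstar + dx (yhat xstar) ≤ h x + dx (yhat x))
    -- `y*` is an integer follower optimum at `x*`
    (ystar : Fin ny → ℝ) (hystar : IntOpt xstar ystar) :
    ∀ x ∈ X, ∀ y : Fin ny → ℝ, IntOpt x y →
      h xstar + dx ystar ≤ h x + dx y + 2 * L2 * ρ := by
  -- Proximity and the Lipschitz bound put `dx y` within `L2 * ρ` of `dx (yhat x)` at every
  -- integer follower optimum; this is used once at `xstar` and once at `x`.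
  have key : ∀ x y, IntOpt x y → |dx y - dx (yhat x)| ≤ L2 * ρ := by
    intro x y hxy
    obtain ⟨hint, hmin⟩ := (hIntOpt x y).1 hxy
    have hp := hprox (C.mulVec x + c) y hint (fun z hz => by
      have hle := hmin z hz
      rwa [hF, hF] at hle)
    have hl := hLip y (yhat x)
    rw [hyhat x, sub_neg_eq_add] at hl
    rw [hyhat x]
    exact hl.trans (mul_le_mul_of_nonneg_left hp hL2)
  intro x hx y hxy
  have hstar := (abs_le.1 (key xstar ystar hystar)).2
  have hlow := (abs_le.1 (key x y hxy)).1
  have hopt := hxstarOpt x hx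
  linarith
end

section
/- Ex-post approximation guarantee for the Relaxed Foresight Algorithm (quadratic follower): for every leader decision x ∈ X and every integer follower optimum y at x, the leader's value obtained by the algorithm satisfies h(x*) + d_x(y*) ≤ h(x) + d_x(y) + L₂·(ρ + ‖y* − ŷ(x*)‖₂). In particular, the algorithm's leader objective exceeds the optimal leader objective of the bilevel program by at most L₂·(ρ + ‖y* − ŷ(x*)‖₂). -/
open Matrix BigOperators

/-- Ex-post approximation guarantee for the Relaxed Foresight Algorithm with a
convex quadratic integer follower: the leader's value obtained by the algorithm
exceeds the value of any bilevel-feasible leader–follower pair by at most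
`L₂ * (ρ + ‖y* − ŷ(x*)‖₂)`, where `ρ` is an ℓ₂ proximity bound for `Q`. -/
theorem relaxed_foresight_ex_post_guarantee
    (nx ny : ℕ) (hnx : 0 < nx) (hny : 0 < ny)
    -- leader's feasible set (nonempty)
    (X : Set (Fin nx → ℝ)) (hX : X.Nonempty)
    -- leader's objective pieces
    (h : (Fin nx → ℝ) → ℝ) (dx : (Fin ny → ℝ) → ℝ)
    -- ℓ₂ norm on the follower's space
    (norm2 : (Fin ny → ℝ) → ℝ)
    (hnorm2 : ∀ v, norm2 v = Real.sqrt (∑ i, (v i) ^ 2))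
    -- `dx` is ℓ₂-Lipschitz with constant `L2 ≥ 0`
    (L2 : ℝ) (hL2 : 0 ≤ L2)
    (hLip : ∀ a b : Fin ny → ℝ, |dx a - dx b| ≤ L2 * norm2 (a - b))
    -- follower's data: symmetric positive definite `Q`, matrix `C`, vector `c`
    (Q : Matrix (Fin ny) (Fin ny) ℝ) (hQsymm : Q.IsSymm) (hQpd : Q.PosDef)
    (C : Matrix (Fin ny) (Fin nx) ℝ) (c : Fin ny → ℝ)
    -- follower's objective
    (F : (Fin nx → ℝ) → (Fin ny → ℝ) → ℝ)
    (hF : ∀ x y, F x y = (1 / 2) * (y ⬝ᵥ Q.mulVec y) + (C.mulVec x + c) ⬝ᵥ y)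
    -- continuous minimizer of the follower's problem
    (yhat : (Fin nx → ℝ) → (Fin ny → ℝ))
    (hyhat : ∀ x, yhat x = -(Q⁻¹.mulVec (C.mulVec x + c)))
    -- integer follower optimum predicate
    (IntOpt : (Fin nx → ℝ) → (Fin ny → ℝ) → Prop)
    (hIntOpt : ∀ x y, IntOpt x y ↔
      ((∀ i, ∃ w : ℤ, y i = (w : ℝ)) ∧
        ∀ z : Fin ny → ℝ, (∀ i, ∃ w : ℤ, z i = (w : ℝ)) → F x y ≤ F x z))
    -- `ρ ≥ 0` is a proximity bound for `Q` in the ℓ₂ norm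
    (ρ : ℝ) (hρ : 0 ≤ ρ)
    (hprox : ∀ c' : Fin ny → ℝ, ∀ v : Fin ny → ℝ,
      (∀ i, ∃ w : ℤ, v i = (w : ℝ)) →
      (∀ z : Fin ny → ℝ, (∀ i, ∃ w : ℤ, z i = (w : ℝ)) →
        (1 / 2) * (v ⬝ᵥ Q.mulVec v) + c' ⬝ᵥ v ≤
          (1 / 2) * (z ⬝ᵥ Q.mulVec z) + c' ⬝ᵥ z) →
      norm2 (v + Q⁻¹.mulVec c') ≤ ρ)
    -- an integer follower optimum exists at every feasible leader decision
    (hexists : ∀ x ∈ X, ∃ y, IntOpt x y)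
    -- `x*` is leader-optimal for the follower-relaxed problem
    (xstar : Fin nx → ℝ) (hxstarX : xstar ∈ X)
    (hxstarOpt : ∀ x ∈ X, h xstar + dx (yhat xstar) ≤ h x + dx (yhat x))
    -- `y*` is an integer follower optimum at `x*`
    (ystar : Fin ny → ℝ) (hystar : IntOpt xstar ystar) :
    ∀ x ∈ X, ∀ y : Fin ny → ℝ, IntOpt x y →
      h xstar + dx ystar ≤ h x + dx y + L2 * (ρ + norm2 (ystar - yhat xstar)) := by
  intro x hx y hy
  obtain ⟨hyint, hymin⟩ := (hIntOpt x y).1 hy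
  -- The proximity bound with `c' = C x + c` applies to `y`, since `ŷ(x) = -Q⁻¹ c'`.
  have hyρ : norm2 (y - yhat x) ≤ ρ := by
    rw [hyhat, sub_neg_eq_add]
    refine hprox _ y hyint fun z hz => ?_
    have hle := hymin z hz
    rwa [hF, hF] at hle
  -- Chain `(x*, y*) → (x*, ŷ(x*)) → (x, ŷ(x)) → (x, y)`: the outer steps cost a Lipschitz
  -- term each, and the middle one is the optimality of `x*` for the relaxed problem.
  have hstar := (abs_le.1 (hLip ystar (yhat xstar))).2
  have hxy := (abs_le.1 (hLip y (yhat x))).1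
  have hopt := hxstarOpt x hx
  have hscaled := mul_le_mul_of_nonneg_left hyρ hL2
  rw [mul_add]
  linarith
end

section
/- Approximation guarantee for the Relaxed Foresight Algorithm with diagonal quadratic term: if Q is a diagonal matrix with positive diagonal entries, then for every leader decision x ∈ X and every integer follower optimum y at x, the leader's value obtained by the algorithm satisfies h(x*) + d_x(y*) ≤ h(x) + d_x(y) + 2·L₂·√(n_y). In particular, the algorithm's leader objective exceeds the optimal leader objective of the bilevel program by at most 2·L₂·√(n_y). -/
/-!
A diagonal quadratic is separable, so moving one coordinate of an integer follower optimum `y` by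
`±1` shows that each coordinate lies within `1/2` of the continuous minimizer `ŷ(x)`
(`abs_add_div_le_half`). Hence `‖y - ŷ(x)‖₂ ≤ √n_y / 2 ≤ √n_y`, and replacing `y` by `ŷ(x)` changes
the leader's value by at most `L₂ √n_y`. Doing so at `x*` and at `x`, and comparing the two relaxed
values by optimality of `x*`, gives the bound.
-/

open Matrix BigOperators

/-- Change of the separable quadratic when one coordinate moves by `t`. -/
lemma quad_add_single {n : ℕ} (q b y : Fin n → ℝ) (i : Fin n) (t : ℝ) :
    (1 / 2) * ((y + Pi.single i t) ⬝ᵥ (diagonal q).mulVec (y + Pi.single i t))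
        + b ⬝ᵥ (y + Pi.single i t)
      = (1 / 2) * (y ⬝ᵥ (diagonal q).mulVec y) + b ⬝ᵥ y
        + (t * (q i * y i + b i) + q i * t ^ 2 / 2) := by
  simp only [mulVec_add, dotProduct_add, add_dotProduct, diagonal_mulVec_single,
    dotProduct_single, single_dotProduct, mulVec_diagonal, Pi.add_apply, Pi.single_eq_same]
  ring

/-- An integer minimizer of a separable convex quadratic is within `1/2` of the continuous
minimizer `-b i / q i` in every coordinate. -/
lemma abs_add_div_le_half {n : ℕ} (q b y : Fin n → ℝ) (hq : ∀ i, 0 < q i)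
    (hy : ∀ i, ∃ w : ℤ, y i = (w : ℝ))
    (hmin : ∀ z : Fin n → ℝ, (∀ i, ∃ w : ℤ, z i = (w : ℝ)) →
      (1 / 2) * (y ⬝ᵥ (diagonal q).mulVec y) + b ⬝ᵥ y
        ≤ (1 / 2) * (z ⬝ᵥ (diagonal q).mulVec z) + b ⬝ᵥ z) (i : Fin n) :
    |y i + b i / q i| ≤ 1 / 2 := by
  have key : ∀ t : ℤ, 0 ≤ (t : ℝ) * (q i * y i + b i) + q i * (t : ℝ) ^ 2 / 2 := by
    intro t
    have h1 := hmin (y + Pi.single i (t : ℝ)) (by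
      intro j
      obtain ⟨w, hw⟩ := hy j
      by_cases hj : j = i
      · subst hj
        exact ⟨w + t, by simp [hw]⟩
      · exact ⟨w, by simp [hw, hj]⟩)
    rw [quad_add_single] at h1
    linarith
  have h1 := key 1
  have h2 := key (-1)
  push_cast at h1 h2
  have hqi := hq i
  have e : y i + b i / q i = (q i * y i + b i) / q i := by field_simp
  rw [e, abs_le, le_div_iff₀ hqi, div_le_iff₀ hqi]
  constructor <;> linarith

/-- Approximation guarantee for the Relaxed Foresight Algorithm when the
follower's quadratic term `Q` is a diagonal matrix with strictly positive
diagonal entries: the leader's value obtained by the algorithm exceeds the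
value of any bilevel-feasible leader–follower pair by at most
`2 * L₂ * √(n_y)`. -/
theorem relaxed_foresight_diagonal_guarantee
    (nx ny : ℕ) (hnx : 0 < nx) (hny : 0 < ny)
    -- leader's feasible set (nonempty)
    (X : Set (Fin nx → ℝ)) (hX : X.Nonempty)
    -- leader's objective pieces
    (h : (Fin nx → ℝ) → ℝ) (dx : (Fin ny → ℝ) → ℝ)
    -- ℓ₂ norm on the follower's space
    (norm2 : (Fin ny → ℝ) → ℝ)
    (hnorm2 : ∀ v, norm2 v = Real.sqrt (∑ i, (v i) ^ 2))
    -- `dx` is ℓ₂-Lipschitz with constant `L2 ≥ 0`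
    (L2 : ℝ) (hL2 : 0 ≤ L2)
    (hLip : ∀ a b : Fin ny → ℝ, |dx a - dx b| ≤ L2 * norm2 (a - b))
    -- follower's data: diagonal `Q` with strictly positive diagonal entries
    (Q : Matrix (Fin ny) (Fin ny) ℝ)
    (hQdiag : ∀ i j, i ≠ j → Q i j = 0)
    (hQpos : ∀ i, 0 < Q i i)
    (C : Matrix (Fin ny) (Fin nx) ℝ) (c : Fin ny → ℝ)
    -- follower's objective
    (F : (Fin nx → ℝ) → (Fin ny → ℝ) → ℝ)
    (hF : ∀ x y, F x y = (1 / 2) * (y ⬝ᵥ Q.mulVec y) + (C.mulVec x + c) ⬝ᵥ y)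
    -- continuous minimizer of the follower's problem
    (yhat : (Fin nx → ℝ) → (Fin ny → ℝ))
    (hyhat : ∀ x, yhat x = -(Q⁻¹.mulVec (C.mulVec x + c)))
    -- integer follower optimum predicate
    (IntOpt : (Fin nx → ℝ) → (Fin ny → ℝ) → Prop)
    (hIntOpt : ∀ x y, IntOpt x y ↔
      ((∀ i, ∃ w : ℤ, y i = (w : ℝ)) ∧
        ∀ z : Fin ny → ℝ, (∀ i, ∃ w : ℤ, z i = (w : ℝ)) → F x y ≤ F x z))
    -- an integer follower optimum exists at every feasible leader decision
    (hexists : ∀ x ∈ X, ∃ y, IntOpt x y)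
    -- `x*` is leader-optimal for the follower-relaxed problem
    (xstar : Fin nx → ℝ) (hxstarX : xstar ∈ X)
    (hxstarOpt : ∀ x ∈ X, h xstar + dx (yhat xstar) ≤ h x + dx (yhat x))
    -- `y*` is an integer follower optimum at `x*`
    (ystar : Fin ny → ℝ) (hystar : IntOpt xstar ystar) :
    ∀ x ∈ X, ∀ y : Fin ny → ℝ, IntOpt x y →
      h xstar + dx ystar ≤ h x + dx y + 2 * L2 * Real.sqrt ny := by
  obtain ⟨q, rfl⟩ : ∃ q, Q = diagonal q := by
    refine ⟨fun i => Q i i, ?_⟩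
    ext i j
    by_cases hij : i = j
    · subst hij; simp
    · simp [hij, hQdiag i j hij]
  have hq : ∀ i, 0 < q i := fun i => by simpa using hQpos i
  have hinv : (diagonal q)⁻¹ = diagonal (fun i => (q i)⁻¹) := by
    apply Matrix.inv_eq_right_inv
    rw [diagonal_mul_diagonal, ← diagonal_one]
    congr 1
    ext i
    exact mul_inv_cancel₀ (hq i).ne'
  have close : ∀ x y, IntOpt x y → |dx y - dx (yhat x)| ≤ L2 * Real.sqrt ny := by
    intro x y hxy
    obtain ⟨hint, hmin⟩ := (hIntOpt x y).1 hxy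
    simp only [hF] at hmin
    refine (hLip _ _).trans (mul_le_mul_of_nonneg_left ?_ hL2)
    rw [hnorm2]
    apply Real.sqrt_le_sqrt
    have hcoord : ∀ i, ((y - yhat x) i) ^ 2 ≤ 1 := by
      intro i
      have hi := abs_add_div_le_half q (C.mulVec x + c) y hq hint hmin i
      have e : (y - yhat x) i = y i + (C.mulVec x + c) i / q i := by
        rw [hyhat, hinv, Pi.sub_apply, Pi.neg_apply, mulVec_diagonal]
        ring
      rw [e, sq_le_one_iff_abs_le_one]
      linarith
    calc ∑ i, ((y - yhat x) i) ^ 2 ≤ ∑ _i : Fin ny, (1 : ℝ) :=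
          Finset.sum_le_sum fun i _ => hcoord i
      _ = ny := by simp
  intro x hx y hxy
  have h1 := (abs_le.1 (close xstar ystar hystar)).2
  have h2 := (abs_le.1 (close x y hxy)).1
  have h3 := hxstarOpt x hx
  linarith
end

section
/- Guarantee under approximate solution of the follower-relaxed problem: suppose instead of solving the relaxed problem exactly, the leader's decision x* ∈ X satisfies the (α,β)-approximation property h(x*) + d_x(ŷ(x*)) ≤ α·(h(x) + d_x(ŷ(x))) + β for every x ∈ X, where α ≥ 1 and β ≥ 0. Then for every x ∈ X and every integer follower optimum y at x, h(x*) + d_x(y*) ≤ α·(h(x) + d_x(y)) + β + (α + 1)·L₂·ρ, where y* is any integer follower optimum at x*. In particular, playing x* against an optimally responding follower gives the leader an objective of at most α·f° + β + (α+1)·L₂·ρ, where f° is the optimal leader objective of the bilevel program. -/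
open Matrix BigOperators

/-- Guarantee under approximate solution of the follower-relaxed problem:
if the leader's decision `x*` solves the follower-relaxed problem within an
`(α, β)`-approximation factor (with `α ≥ 1`, `β ≥ 0`), then playing `x*`
against an optimally responding integer follower gives the leader an
objective of at most `α·(h x + dx y) + β + (α + 1)·L₂·ρ` for every
bilevel-feasible pair `(x, y)`; in particular at most
`α·f° + β + (α + 1)·L₂·ρ` where `f°` is the bilevel optimum. -/
theorem relaxed_foresight_approx_FRV_guarantee
    (nx ny : ℕ) (hnx : 0 < nx) (hny : 0 < ny)
    -- leader's feasible set (nonempty)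
    (X : Set (Fin nx → ℝ)) (hX : X.Nonempty)
    -- leader's objective pieces
    (h : (Fin nx → ℝ) → ℝ) (dx : (Fin ny → ℝ) → ℝ)
    -- ℓ₂ norm on the follower's space
    (norm2 : (Fin ny → ℝ) → ℝ)
    (hnorm2 : ∀ v, norm2 v = Real.sqrt (∑ i, (v i) ^ 2))
    -- `dx` is ℓ₂-Lipschitz with constant `L2 ≥ 0`
    (L2 : ℝ) (hL2 : 0 ≤ L2)
    (hLip : ∀ a b : Fin ny → ℝ, |dx a - dx b| ≤ L2 * norm2 (a - b))
    -- follower's data: symmetric positive definite `Q`, matrix `C`, vector `c`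
    (Q : Matrix (Fin ny) (Fin ny) ℝ) (hQsymm : Q.IsSymm) (hQpd : Q.PosDef)
    (C : Matrix (Fin ny) (Fin nx) ℝ) (c : Fin ny → ℝ)
    -- follower's objective
    (F : (Fin nx → ℝ) → (Fin ny → ℝ) → ℝ)
    (hF : ∀ x y, F x y = (1 / 2) * (y ⬝ᵥ Q.mulVec y) + (C.mulVec x + c) ⬝ᵥ y)
    -- continuous minimizer of the follower's problem
    (yhat : (Fin nx → ℝ) → (Fin ny → ℝ))
    (hyhat : ∀ x, yhat x = -(Q⁻¹.mulVec (C.mulVec x + c)))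
    -- integer follower optimum predicate
    (IntOpt : (Fin nx → ℝ) → (Fin ny → ℝ) → Prop)
    (hIntOpt : ∀ x y, IntOpt x y ↔
      ((∀ i, ∃ w : ℤ, y i = (w : ℝ)) ∧
        ∀ z : Fin ny → ℝ, (∀ i, ∃ w : ℤ, z i = (w : ℝ)) → F x y ≤ F x z))
    -- an integer follower optimum exists at every feasible leader decision
    (hexists : ∀ x ∈ X, ∃ y, IntOpt x y)
    -- `ρ ≥ 0` is a proximity bound for `Q` in the ℓ₂ norm
    (ρ : ℝ) (hρ : 0 ≤ ρ)
    (hprox : ∀ c' : Fin ny → ℝ, ∀ v : Fin ny → ℝ,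
      (∀ i, ∃ w : ℤ, v i = (w : ℝ)) →
      (∀ z : Fin ny → ℝ, (∀ i, ∃ w : ℤ, z i = (w : ℝ)) →
        (1 / 2) * (v ⬝ᵥ Q.mulVec v) + c' ⬝ᵥ v ≤
          (1 / 2) * (z ⬝ᵥ Q.mulVec z) + c' ⬝ᵥ z) →
      norm2 (v + Q⁻¹.mulVec c') ≤ ρ)
    -- `x*` solves the follower-relaxed problem `(α, β)`-approximately
    (α β : ℝ) (hα : 1 ≤ α) (hβ : 0 ≤ β)
    (xstar : Fin nx → ℝ) (hxstarX : xstar ∈ X)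
    (hxstarApx : ∀ x ∈ X,
      h xstar + dx (yhat xstar) ≤ α * (h x + dx (yhat x)) + β) :
    ∀ ystar : Fin ny → ℝ, IntOpt xstar ystar →
      ∀ x ∈ X, ∀ y : Fin ny → ℝ, IntOpt x y →
        h xstar + dx ystar ≤ α * (h x + dx y) + β + (α + 1) * L2 * ρ := by
  -- `hprox` at `c' = C x + c` places every integer optimum within `ρ` of `yhat x`;
  -- the Lipschitz bound turns this into a leader-objective error of at most `L2 * ρ`.
  have key : ∀ x y, IntOpt x y → |dx y - dx (yhat x)| ≤ L2 * ρ := by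
    intro x y hy
    obtain ⟨hint, hmin⟩ := (hIntOpt x y).1 hy
    have hdist : norm2 (y - yhat x) ≤ ρ := by
      rw [hyhat, sub_neg_eq_add]
      refine hprox _ y hint fun z hz => ?_
      simpa only [hF] using hmin z hz
    exact (hLip _ _).trans (mul_le_mul_of_nonneg_left hdist hL2)
  intro ystar hystar x hx y hy
  have hstar := (abs_le.1 (key xstar ystar hystar)).2
  have hxy := (abs_le.1 (key x y hy)).1
  -- The error at `x*` enters once, the error at `x` is scaled by `α`: total `(α + 1) * L2 * ρ`.
  have hscaled : α * dx (yhat x) ≤ α * (dx y + L2 * ρ) :=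
    mul_le_mul_of_nonneg_left (by linarith) (by linarith)
  linarith [hxstarApx x hx]
end

section
/- Approximation guarantee for the Relaxed Foresight Algorithm with an integer-linear follower (few variables, many constraints): for every leader decision x ∈ X and every maximizer y of dᵀy over P(x) ∩ ℤ^{n_y}, the leader's value obtained by the algorithm satisfies h(x*) + dᵀy* ≤ h(x) + dᵀy + 2·‖d‖₁·n_y·Δ(D). In particular, the algorithm's leader objective exceeds the optimal leader objective of the bilevel program by at most 2·‖d‖₁·n_y·Δ(D). -/
/-!
The proof rests on the proximity argument of Cook, Gerards, Schrijver and Tardos.  For a fixed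
leader decision, let `y` be an integer optimum and `ŷ` a relaxed optimum of the follower's problem.
The claim reduces to `d ⬝ᵥ ŷ ≤ d ⬝ᵥ y + ‖d‖₁ * n * Δ`, since the leader's value of `(x*, y*)` is at
most that of `(x*, ŷ*)`, which is at most that of `(x, ŷ)`.

To bound the gap, `v = ŷ - y` is mapped to `A v = (D v, v)`.  The vector `v` is decomposed as a
nonnegative combination of at most `n` integer vectors `c` for which `A c` is sign-compatible with
`A v`, all entries of `c` being at most `Δ` in absolute value (`exists_elementary`,
`exists_integer_kernel_vector`, `exists_step`).  Rounding the coefficients down yields an integer vector `p` such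
that `A p` lies between `0` and `A v` and `v - p` has entries at most `n * Δ` (`exists_rounding`).
Then `y + p` is feasible for the integer program: every row of `D (y + p)` lies between the
corresponding rows of `D y` and `D ŷ`.  Optimality of `y` gives `d ⬝ᵥ p ≤ 0`, and therefore
`d ⬝ᵥ v ≤ d ⬝ᵥ (v - p) ≤ ‖d‖₁ * n * Δ`.

The integer vectors `c` come from Cramer's rule: a maximal nonsingular submatrix on the admissible
rows and columns is bordered by one more column, and `c` is the vector of signed maximal minors.
-/

open Matrix BigOperators

namespace RelaxedForesight

/-! ### Sign-compatible decomposition -/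

section Decomposition

variable {V ι : Type*} [AddCommGroup V] [Module ℝ V] [Fintype ι]

/-- The vectors `z` such that the support of `A z` is contained in the support of `A v`. -/
def suppSpace (A : V →ₗ[ℝ] (ι → ℝ)) (v : V) : Submodule ℝ V where
  carrier := {z | ∀ i, A v i = 0 → A z i = 0}
  zero_mem' := by intro i _; simp
  add_mem' := by
    intro a b ha hb i hi
    simp [ha i hi, hb i hi]
  smul_mem' := by
    intro r a ha i hi
    simp [ha i hi]

/-- `a` lies in every closed orthant containing `b`: where `b` is nonnegative so is `a`, where `b` is
nonpositive so is `a` (in particular `a` vanishes where `b` does). -/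
def SignCompat (a b : ι → ℝ) : Prop :=
  ∀ i, (0 ≤ b i → 0 ≤ a i) ∧ (b i ≤ 0 → a i ≤ 0)

/-- Moving from `v` along a direction `w` supported in `A v` until some coordinate of `A v` first
vanishes.  The step length `t` minimises `|A v i| / |A w i|`, so no coordinate changes sign. -/
theorem exists_step (A : V →ₗ[ℝ] (ι → ℝ)) (hA : Function.Injective A) [FiniteDimensional ℝ V]
    (v w : V) (hw : w ≠ 0) (hwv : w ∈ suppSpace A v) :
    ∃ t : ℝ, SignCompat (A (v - t • w)) (A v) ∧
      Module.finrank ℝ (suppSpace A (v - t • w)) < Module.finrank ℝ (suppSpace A v) ∧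
      (SignCompat (A w) (A v) → 0 ≤ t) := by
  classical
  have hne : (Finset.univ.filter fun i => A w i ≠ 0).Nonempty := by
    by_contra hcon
    rw [Finset.not_nonempty_iff_eq_empty, Finset.filter_eq_empty_iff] at hcon
    apply hw
    apply hA
    rw [map_zero]
    funext i
    have := hcon (Finset.mem_univ i)
    simpa using this
  obtain ⟨i, hi, hmin⟩ := Finset.exists_min_image _ (fun i => |A v i| / |A w i|) hne
  have hwi : A w i ≠ 0 := (Finset.mem_filter.mp hi).2
  have hvi : A v i ≠ 0 := fun h0 => hwi (hwv i h0)
  have hbound : ∀ k, |A v i / A w i * A w k| ≤ |A v k| := by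
    intro k
    by_cases hk : A w k = 0
    · simp [hk]
    · have h1 := hmin k (Finset.mem_filter.mpr ⟨Finset.mem_univ _, hk⟩)
      rw [abs_mul, abs_div]
      exact (le_div_iff₀ (abs_pos.mpr hk)).mp h1
  have hsign : SignCompat (A (v - (A v i / A w i) • w)) (A v) := by
    intro k
    have h1 := hbound k
    simp only [map_sub, map_smul, Pi.sub_apply, Pi.smul_apply, smul_eq_mul]
    constructor
    · intro h2
      rw [abs_of_nonneg h2] at h1
      linarith [(abs_le.mp h1).2]
    · intro h2
      rw [abs_of_nonpos h2] at h1
      linarith [(abs_le.mp h1).1]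
  refine ⟨A v i / A w i, hsign, ?_, ?_⟩
  · apply Submodule.finrank_lt_finrank_of_lt
    refine lt_of_le_of_ne ?_ ?_
    · intro z hz k hk
      exact hz k (le_antisymm ((hsign k).2 hk.le) ((hsign k).1 hk.ge))
    · intro heq
      have hv : v ∈ suppSpace A v := fun _ hk => hk
      rw [← heq] at hv
      apply hvi
      apply hv i
      simp [hwi]
  · intro hc
    rcases le_total 0 (A v i) with h0 | h0
    · exact div_nonneg h0 ((hc i).1 h0)
    · exact div_nonneg_of_nonpos h0 ((hc i).2 h0)

/-- Every nonzero `v` has a nonzero sign-compatible `u` with inclusion-minimal support, the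
minimality being expressed by: all vectors supported in `A u` are multiples of `u`. -/
theorem exists_elementary (A : V →ₗ[ℝ] (ι → ℝ)) (hA : Function.Injective A)
    [FiniteDimensional ℝ V] (v : V) (hv : v ≠ 0) :
    ∃ u : V, u ≠ 0 ∧ SignCompat (A u) (A v) ∧ ∀ w ∈ suppSpace A u, ∃ s : ℝ, w = s • u := by
  induction hN : Module.finrank ℝ (suppSpace A v) using Nat.strong_induction_on generalizing v with
  | _ N ih =>
    by_cases hall : ∀ w ∈ suppSpace A v, ∃ s : ℝ, w = s • v
    · exact ⟨v, hv, fun i => ⟨id, id⟩, hall⟩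
    · push Not at hall
      obtain ⟨w, hwv, hw⟩ := hall
      have hw0 : w ≠ 0 := fun h0 => hw 0 (by simp [h0])
      obtain ⟨t, hsign, hlt, -⟩ := exists_step A hA v w hw0 hwv
      have hne : v - t • w ≠ 0 := by
        intro h0
        have h1 : v = t • w := sub_eq_zero.mp h0
        have ht : t ≠ 0 := by
          rintro rfl
          exact hv (by simpa using h1)
        exact hw t⁻¹ (by rw [h1, smul_smul, inv_mul_cancel₀ ht, one_smul])
      obtain ⟨u, hu, hus, hur⟩ := ih _ (hN ▸ hlt) (v - t • w) hne rfl
      exact ⟨u, hu, fun i => ⟨fun h => (hus i).1 ((hsign i).1 h),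
        fun h => (hus i).2 ((hsign i).2 h)⟩, hur⟩

end Decomposition

/-! ### Integer kernel vectors with bounded entries -/

/-- If `u ≠ 0` is supported on the columns `S` and annihilated by the rows `T` of `D`, then some
nonzero integer vector with entries at most `Δ` has the same two properties.  It is the vector of
signed maximal minors of a maximal nonsingular `T × S` submatrix bordered by a further column. -/
theorem exists_integer_kernel_vector {m n : ℕ} (D : Matrix (Fin m) (Fin n) ℤ) (Δ : ℝ)
    (hΔ1 : 1 ≤ Δ)
    (hΔ : ∀ (k : ℕ), 0 < k → ∀ (ri : Fin k → Fin m) (ci : Fin k → Fin n),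
      Function.Injective ri → Function.Injective ci →
      |(((D.submatrix ri ci).det : ℤ) : ℝ)| ≤ Δ)
    (T : Set (Fin m)) (S : Set (Fin n)) (u : Fin n → ℝ) (hu : u ≠ 0)
    (huS : ∀ j, j ∉ S → u j = 0)
    (huT : ∀ i ∈ T, (D.map (Int.cast : ℤ → ℝ)).mulVec u i = 0) :
    ∃ c : Fin n → ℤ, c ≠ 0 ∧ (∀ j, j ∉ S → c j = 0) ∧ (∀ i ∈ T, D.mulVec c i = 0) ∧
      ∀ j, |(c j : ℝ)| ≤ Δ := by
  classical
  have inj_row : ∀ {k : ℕ} (ri : Fin k → Fin m) (ci : Fin k → Fin n),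
      (D.submatrix ri ci).det ≠ 0 → Function.Injective ri := by
    intro k ri ci hdet a b hab
    by_contra hne
    exact hdet (Matrix.det_zero_of_row_eq hne (by funext l; simp [hab]))
  have inj_col : ∀ {k : ℕ} (ri : Fin k → Fin m) (ci : Fin k → Fin n),
      (D.submatrix ri ci).det ≠ 0 → Function.Injective ci := by
    intro k ri ci hdet a b hab
    by_contra hne
    exact hdet (Matrix.det_zero_of_column_eq hne (by intro l; simp [hab]))
  have hΔ' : ∀ (k : ℕ) (ri : Fin k → Fin m) (ci : Fin k → Fin n),
      |(((D.submatrix ri ci).det : ℤ) : ℝ)| ≤ Δ := by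
    intro k ri ci
    by_cases hdet : (D.submatrix ri ci).det = 0
    · rw [hdet]; simp; linarith
    · rcases Nat.eq_zero_or_pos k with rfl | hk
      · simpa using hΔ1
      · exact hΔ k hk ri ci (inj_row ri ci hdet) (inj_col ri ci hdet)
  let Q : ℕ → Prop := fun k => ∃ (ri : Fin k → Fin m) (ci : Fin k → Fin n),
    (∀ a, ri a ∈ T) ∧ (∀ a, ci a ∈ S) ∧ (D.submatrix ri ci).det ≠ 0
  have hQ0 : Q 0 := ⟨Fin.elim0, Fin.elim0, fun a => a.elim0, fun a => a.elim0, by simp⟩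
  have hQn : ¬ Q (n + 1) := by
    rintro ⟨ri, ci, -, -, hdet⟩
    have := Fintype.card_le_of_injective ci (inj_col ri ci hdet)
    simp at this
  obtain ⟨k, hk, hk1⟩ : ∃ k, Q k ∧ ¬ Q (k + 1) := by
    by_contra hcon
    push Not at hcon
    exact hQn (Nat.rec hQ0 hcon (n + 1))
  obtain ⟨ri, ci, hri, hci, hdet⟩ := hk
  have hciInj := inj_col ri ci hdet
  -- The nonsingular block cannot use all columns of `S`, otherwise `u` would vanish.
  obtain ⟨j, hjS, hjc⟩ : ∃ j ∈ S, j ∉ Set.range ci := by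
    by_contra hcon
    push Not at hcon
    have hoff : ∀ j, j ∉ Set.range ci → u j = 0 := fun j hj => huS j fun hjS => hj (hcon j hjS)
    have hker : ((D.submatrix ri ci).map (Int.cast : ℤ → ℝ)).mulVec (u ∘ ci) = 0 := by
      funext a
      have h1 := huT (ri a) (hri a)
      simp only [Matrix.mulVec, dotProduct, Matrix.map_apply] at h1
      simp only [Matrix.mulVec, dotProduct, Matrix.map_apply, Matrix.submatrix_apply,
        Function.comp_apply, Pi.zero_apply]
      rw [← h1]
      exact Fintype.sum_of_injective ci hciInj _ _ (fun j hj => by simp [hoff j hj]) (fun _ => rfl)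
    have hdetR : ((D.submatrix ri ci).map (Int.cast : ℤ → ℝ)).det ≠ 0 := by
      have h2 := (Int.castRingHom ℝ).map_det (D.submatrix ri ci)
      intro h3
      apply hdet
      have h4 : (((D.submatrix ri ci).det : ℤ) : ℝ) = 0 := by
        rw [← h3]
        exact h2
      exact_mod_cast h4
    have hz := Matrix.eq_zero_of_mulVec_eq_zero hdetR hker
    apply hu
    funext j
    by_cases hj : j ∈ Set.range ci
    · obtain ⟨a, rfl⟩ := hj
      exact congrFun hz a
    · exact hoff j hj
  let cols : Fin (k + 1) → Fin n := Fin.cons j ci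
  have hcols : Function.Injective cols := Fin.cons_injective_iff.mpr ⟨hjc, hciInj⟩
  have hcolsS : ∀ l, cols l ∈ S := by
    intro l
    refine Fin.cases ?_ (fun a => ?_) l
    · exact hjS
    · exact hci a
  let coef : Fin (k + 1) → ℤ := fun l =>
    (-1) ^ (l : ℕ) * (D.submatrix ri (cols ∘ l.succAbove)).det
  have hcoef : ∀ l, |(coef l : ℝ)| ≤ Δ := by
    intro l
    have h1 := hΔ' k ri (cols ∘ l.succAbove)
    simpa [coef, abs_mul] using h1
  refine ⟨Function.extend cols coef 0, ?_, ?_, ?_, ?_⟩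
  · intro h0
    have h1 := congrFun h0 (cols 0)
    rw [hcols.extend_apply] at h1
    apply hdet
    have h2 : cols ∘ (0 : Fin (k + 1)).succAbove = ci := by
      funext a
      simp [cols]
    simp only [coef, h2] at h1
    simpa using h1
  · intro j' hj'
    apply Function.extend_apply'
    rintro ⟨l, rfl⟩
    exact hj' (hcolsS l)
  · intro i hi
    -- Laplace expansion along the row `i` placed on top; the determinant is zero by maximality.
    have hz : (D.submatrix (Fin.cons i ri : Fin (k + 1) → Fin m) cols).det = 0 := by
      by_contra hne
      refine hk1 ⟨_, cols, ?_, hcolsS, hne⟩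
      intro a
      refine Fin.cases ?_ (fun b => ?_) a
      · exact hi
      · exact hri b
    rw [Matrix.det_succ_row_zero] at hz
    rw [← hz]
    simp only [Matrix.mulVec, dotProduct]
    symm
    refine Fintype.sum_of_injective cols hcols _ _ ?_ ?_
    · intro j' hj'
      rw [Function.extend_apply' _ _ _ (by simpa using hj')]
      simp
    · intro l
      rw [hcols.extend_apply]
      have h2 : (D.submatrix (Fin.cons i ri : Fin (k + 1) → Fin m) cols).submatrix
          Fin.succ l.succAbove = D.submatrix ri (cols ∘ l.succAbove) := by
        ext a b
        simp
      rw [h2]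
      simp only [coef, Matrix.submatrix_apply, Fin.cons_zero]
      ring
  · intro j'
    by_cases hj' : ∃ l, cols l = j'
    · obtain ⟨l, rfl⟩ := hj'
      rw [hcols.extend_apply]
      exact hcoef l
    · rw [Function.extend_apply' _ _ _ hj']
      simp
      linarith

/-! ### Rounding along integer directions -/

/-- The map `z ↦ (D z, z)`; recording `z` itself makes it injective, so that the sign cones in its
range are pointed. -/
noncomputable def graphMap {m n : ℕ} (D : Matrix (Fin m) (Fin n) ℤ) :
    (Fin n → ℝ) →ₗ[ℝ] (Fin m ⊕ Fin n → ℝ) :=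
  (Matrix.fromRows (D.map (Int.cast : ℤ → ℝ)) 1).mulVecLin

theorem graphMap_inl {m n : ℕ} (D : Matrix (Fin m) (Fin n) ℤ) (z : Fin n → ℝ) (i : Fin m) :
    graphMap D z (Sum.inl i) = (D.map (Int.cast : ℤ → ℝ)).mulVec z i := by
  simp [graphMap, Matrix.fromRows_mulVec]

theorem graphMap_inr {m n : ℕ} (D : Matrix (Fin m) (Fin n) ℤ) (z : Fin n → ℝ) (j : Fin n) :
    graphMap D z (Sum.inr j) = z j := by
  simp [graphMap, Matrix.fromRows_mulVec]

theorem graphMap_injective {m n : ℕ} (D : Matrix (Fin m) (Fin n) ℤ) :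
    Function.Injective (graphMap D) := by
  intro a b hab
  funext j
  rw [← graphMap_inr D a j, hab, graphMap_inr]

/-- Each nonzero `v` has a nonzero integer vector `c` with entries at most `Δ` whose image
`(D c, c)` is sign-compatible with `(D v, v)`. -/
theorem exists_integer_direction {m n : ℕ} (D : Matrix (Fin m) (Fin n) ℤ) (Δ : ℝ)
    (hΔ1 : 1 ≤ Δ)
    (hΔ : ∀ (k : ℕ), 0 < k → ∀ (ri : Fin k → Fin m) (ci : Fin k → Fin n),
      Function.Injective ri → Function.Injective ci →
      |(((D.submatrix ri ci).det : ℤ) : ℝ)| ≤ Δ)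
    (v : Fin n → ℝ) (hv : v ≠ 0) :
    ∃ c : Fin n → ℤ, (fun j => (c j : ℝ)) ≠ 0 ∧
      SignCompat (graphMap D fun j => (c j : ℝ)) (graphMap D v) ∧ ∀ j, |(c j : ℝ)| ≤ Δ := by
  obtain ⟨u, hu, hus, hur⟩ := exists_elementary (graphMap D) (graphMap_injective D) v hv
  obtain ⟨c, hc0, hcS, hcT, hcΔ⟩ := exists_integer_kernel_vector D Δ hΔ1 hΔ
    {i | graphMap D u (Sum.inl i) = 0} {j | u j ≠ 0} u hu (fun j hj => by simpa using hj)
    (fun i hi => by rw [← graphMap_inl]; exact hi)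
  have hcne : (fun j => (c j : ℝ)) ≠ 0 := by
    intro h0
    apply hc0
    funext j
    have := congrFun h0 j
    simpa using this
  have hcW : (fun j => (c j : ℝ)) ∈ suppSpace (graphMap D) u := by
    rintro (i | j) hi
    · rw [graphMap_inl]
      have h1 := hcT i hi
      simp only [Matrix.mulVec, dotProduct] at h1 ⊢
      simp only [Matrix.map_apply]
      exact_mod_cast h1
    · rw [graphMap_inr] at hi ⊢
      have := hcS j (by simpa using hi)
      simp [this]
  obtain ⟨s, hs⟩ := hur _ hcW
  -- `c = s • u`; the sign of `s` decides between `c` and `-c`.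
  rcases le_total 0 s with h0 | h0
  · refine ⟨c, hcne, ?_, hcΔ⟩
    rw [hs]
    intro i
    simp only [map_smul, Pi.smul_apply, smul_eq_mul]
    exact ⟨fun h => mul_nonneg h0 ((hus i).1 h),
      fun h => mul_nonpos_of_nonneg_of_nonpos h0 ((hus i).2 h)⟩
  · have hneg : (fun j => (((-c) j : ℤ) : ℝ)) = -(fun j => (c j : ℝ)) := by
      funext j
      simp
    refine ⟨-c, ?_, ?_, fun j => by simpa using hcΔ j⟩
    · rw [hneg]
      exact neg_ne_zero.mpr hcne
    · rw [hneg, hs]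
      intro i
      simp only [map_neg, map_smul, Pi.neg_apply, Pi.smul_apply, smul_eq_mul]
      exact ⟨fun h => by nlinarith [mul_nonneg (neg_nonneg.mpr h0) ((hus i).1 h)],
        fun h => by nlinarith [mul_nonneg_of_nonpos_of_nonpos h0 ((hus i).2 h)]⟩

/-- Rounding `v` to an integer vector `p` with `(D p, p)` coordinatewise between `0` and `(D v, v)`.
Each integer direction split off costs a rounding error of at most `Δ` per entry and lowers the
dimension of the support space by at least one. -/
theorem exists_rounding {m n : ℕ} (D : Matrix (Fin m) (Fin n) ℤ) (Δ : ℝ)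
    (hΔ1 : 1 ≤ Δ)
    (hΔ : ∀ (k : ℕ), 0 < k → ∀ (ri : Fin k → Fin m) (ci : Fin k → Fin n),
      Function.Injective ri → Function.Injective ci →
      |(((D.submatrix ri ci).det : ℤ) : ℝ)| ≤ Δ)
    (v : Fin n → ℝ) :
    ∃ p : Fin n → ℤ,
      SignCompat (graphMap D fun j => (p j : ℝ)) (graphMap D v) ∧
      SignCompat (graphMap D (v - fun j => (p j : ℝ))) (graphMap D v) ∧
      ∀ j, |v j - p j| ≤ Module.finrank ℝ (suppSpace (graphMap D) v) * Δ := by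
  induction hN : Module.finrank ℝ (suppSpace (graphMap D) v) using Nat.strong_induction_on
    generalizing v with
  | _ N ih =>
    by_cases hv : v = 0
    · subst hv
      refine ⟨0, ?_, ?_, ?_⟩
      · intro i
        have : (fun j => (((0 : Fin n → ℤ) j : ℤ) : ℝ)) = 0 := by funext j; simp
        rw [this]
        exact ⟨id, id⟩
      · intro i
        have : (fun j => (((0 : Fin n → ℤ) j : ℤ) : ℝ)) = 0 := by funext j; simp
        rw [this, sub_zero]
        exact ⟨id, id⟩
      · intro j
        simp
        positivity
    · obtain ⟨c, hc0, hcs, hcΔ⟩ := exists_integer_direction D Δ hΔ1 hΔ v hv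
      have hcW : (fun j => (c j : ℝ)) ∈ suppSpace (graphMap D) v := fun i hi =>
        le_antisymm ((hcs i).2 hi.le) ((hcs i).1 hi.ge)
      obtain ⟨t, hts, hlt, ht⟩ := exists_step (graphMap D) (graphMap_injective D) v _ hc0 hcW
      have ht0 := ht hcs
      obtain ⟨p, hp1, hp2, hp3⟩ := ih _ (hN ▸ hlt) _ rfl
      have hfl0 : (0 : ℝ) ≤ ⌊t⌋ := by exact_mod_cast Int.floor_nonneg.mpr ht0
      have hfr0 : 0 ≤ t - ⌊t⌋ := sub_nonneg.mpr (Int.floor_le t)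
      have hfr1 : t - ⌊t⌋ ≤ 1 := by linarith [Int.lt_floor_add_one t]
      have e1 : (fun j => (((p + ⌊t⌋ • c) j : ℤ) : ℝ)) =
          (fun j => (p j : ℝ)) + (⌊t⌋ : ℝ) • (fun j => (c j : ℝ)) := by
        funext j
        simp
      have e2 : v - ((fun j => (p j : ℝ)) + (⌊t⌋ : ℝ) • (fun j => (c j : ℝ))) =
          ((v - t • (fun j => (c j : ℝ))) - fun j => (p j : ℝ)) +
            (t - ⌊t⌋) • (fun j => (c j : ℝ)) := by
        rw [sub_smul]
        abel
      refine ⟨p + ⌊t⌋ • c, ?_, ?_, ?_⟩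
      · rw [e1]
        intro i
        rw [map_add, map_smul]
        simp only [Pi.add_apply, Pi.smul_apply, smul_eq_mul]
        exact ⟨fun h => add_nonneg ((hp1 i).1 ((hts i).1 h)) (mul_nonneg hfl0 ((hcs i).1 h)),
          fun h => add_nonpos ((hp1 i).2 ((hts i).2 h))
            (mul_nonpos_of_nonneg_of_nonpos hfl0 ((hcs i).2 h))⟩
      · rw [e1, e2]
        intro i
        rw [map_add, map_smul]
        simp only [Pi.add_apply, Pi.smul_apply, smul_eq_mul]
        exact ⟨fun h => add_nonneg ((hp2 i).1 ((hts i).1 h)) (mul_nonneg hfr0 ((hcs i).1 h)),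
          fun h => add_nonpos ((hp2 i).2 ((hts i).2 h))
            (mul_nonpos_of_nonneg_of_nonpos hfr0 ((hcs i).2 h))⟩
      · intro j
        have h1 := hp3 j
        simp only [Pi.sub_apply, Pi.smul_apply, smul_eq_mul] at h1
        have h2 : |(t - ⌊t⌋) * (c j : ℝ)| ≤ Δ := by
          rw [abs_mul, abs_of_nonneg hfr0]
          calc (t - ⌊t⌋) * |(c j : ℝ)| ≤ 1 * Δ :=
                mul_le_mul hfr1 (hcΔ j) (abs_nonneg _) zero_le_one
            _ = Δ := one_mul _
        have h3 : v j - (((p + ⌊t⌋ • c) j : ℤ) : ℝ) =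
            (v j - t * c j - p j) + (t - ⌊t⌋) * c j := by
          simp only [Pi.add_apply, Pi.smul_apply, smul_eq_mul, Int.cast_add, Int.cast_mul]
          ring
        rw [h3]
        refine (abs_add_le _ _).trans ((add_le_add h1 h2).trans ?_)
        have h4 : ((Module.finrank ℝ (suppSpace (graphMap D) (v - t • fun j => (c j : ℝ))) : ℕ) : ℝ)
            + 1 ≤ N := by
          rw [← hN]
          exact_mod_cast hlt
        nlinarith

/-! ### Integrality gap -/

/-- The integrality gap: a relaxed feasible point beats an integer optimum by at most
`‖d‖₁ * n * Δ`. -/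
theorem gap_bound {m n : ℕ} (D : Matrix (Fin m) (Fin n) ℤ) (Δ : ℝ)
    (hΔ1 : 1 ≤ Δ)
    (hΔ : ∀ (k : ℕ), 0 < k → ∀ (ri : Fin k → Fin m) (ci : Fin k → Fin n),
      Function.Injective ri → Function.Injective ci →
      |(((D.submatrix ri ci).det : ℤ) : ℝ)| ≤ Δ)
    (d : Fin n → ℝ) (b : Fin m → ℝ) (y yh : Fin n → ℝ)
    (hyint : ∀ i, ∃ w : ℤ, y i = (w : ℝ))
    (hy : ∀ i, b i + (D.map (Int.cast : ℤ → ℝ)).mulVec y i ≤ 0)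
    (hyh : ∀ i, b i + (D.map (Int.cast : ℤ → ℝ)).mulVec yh i ≤ 0)
    (hopt : ∀ z : Fin n → ℝ, (∀ i, ∃ w : ℤ, z i = (w : ℝ)) →
      (∀ i, b i + (D.map (Int.cast : ℤ → ℝ)).mulVec z i ≤ 0) → d ⬝ᵥ z ≤ d ⬝ᵥ y) :
    d ⬝ᵥ yh ≤ d ⬝ᵥ y + (∑ i, |d i|) * n * Δ := by
  obtain ⟨p, hp1, hp2, hp3⟩ := exists_rounding D Δ hΔ1 hΔ (yh - y)
  set q : Fin n → ℝ := fun j => (p j : ℝ) with hq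
  have hz := hopt (y + q)
    (fun i => by
      obtain ⟨w, hw⟩ := hyint i
      exact ⟨w + p i, by simp [hw, hq]⟩)
    (fun i => by
      have h1 := hp1 (Sum.inl i)
      have h2 := hp2 (Sum.inl i)
      simp only [graphMap_inl, Matrix.mulVec_sub, Pi.sub_apply] at h1 h2
      have ha := hy i
      have hb := hyh i
      rw [Matrix.mulVec_add, Pi.add_apply]
      rcases le_total 0 ((D.map (Int.cast : ℤ → ℝ)).mulVec yh i -
        (D.map (Int.cast : ℤ → ℝ)).mulVec y i) with h0 | h0
      · linarith [h2.1 h0]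
      · linarith [h1.2 h0])
  have hrank : ((Module.finrank ℝ (suppSpace (graphMap D) (yh - y)) : ℕ) : ℝ) ≤ n := by
    have := Submodule.finrank_le (suppSpace (graphMap D) (yh - y))
    rw [Module.finrank_fin_fun] at this
    exact_mod_cast this
  have herr : d ⬝ᵥ (yh - y - q) ≤ (∑ i, |d i|) * n * Δ := by
    rw [mul_assoc, Finset.sum_mul]
    refine Finset.sum_le_sum fun j _ => ?_
    refine (le_abs_self _).trans ?_
    rw [abs_mul]
    refine mul_le_mul_of_nonneg_left ((hp3 j).trans ?_) (abs_nonneg _)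
    exact mul_le_mul_of_nonneg_right hrank (by linarith)
  rw [dotProduct_add] at hz
  rw [dotProduct_sub, dotProduct_sub] at herr
  linarith

end RelaxedForesight

/-- Approximation guarantee for the Relaxed Foresight Algorithm with an
integer-linear follower (few variables, many constraints): the leader's value
obtained by the algorithm exceeds the value of any bilevel-feasible
leader–follower pair by at most `2 * ‖d‖₁ * n_y * Δ(D)`, where `Δ(D)` bounds
the absolute values of all subdeterminants of the integral matrix `D`. -/
theorem relaxed_foresight_linear_follower_subdeterminant_guarantee
    (nx ny m : ℕ) (hnx : 0 < nx) (hny : 0 < ny) (hm : 0 < m)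
    -- leader's decisions
    (X : Type) (hX : Nonempty X)
    (h : X → ℝ)
    -- follower's (and leader's, negated) linear objective
    (d : Fin ny → ℝ)
    -- follower's constraint data: integral matrix `D`, integer-valued `g`
    (D : Matrix (Fin m) (Fin ny) ℤ)
    (g : X → Fin m → ℤ)
    -- follower's relaxed feasible set `P x = {y | g x + D y ≤ 0}`
    (P : X → Set (Fin ny → ℝ))
    (hP : ∀ x, P x = {y : Fin ny → ℝ |
      ∀ i, (g x i : ℝ) + (D.map (Int.cast : ℤ → ℝ)).mulVec y i ≤ 0})
    -- integrality predicate
    (IsInt : (Fin ny → ℝ) → Prop)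
    (hIsInt : ∀ y, IsInt y ↔ ∀ i, ∃ w : ℤ, y i = (w : ℝ))
    -- for every `x`, the integer feasible set is nonempty and both the relaxed
    -- and the integer linear program attain finite maxima
    (hfeas : ∀ x : X, ∃ y, IsInt y ∧ y ∈ P x)
    (hmaxR : ∀ x : X, ∃ yh ∈ P x, ∀ y ∈ P x, d ⬝ᵥ y ≤ d ⬝ᵥ yh)
    (hmaxZ : ∀ x : X, ∃ yt, IsInt yt ∧ yt ∈ P x ∧
      ∀ y, IsInt y → y ∈ P x → d ⬝ᵥ y ≤ d ⬝ᵥ yt)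
    -- `Δ` bounds the absolute value of every (nonempty) subdeterminant of `D`
    (Δ : ℝ)
    (hΔ : ∀ (k : ℕ), 0 < k → ∀ (ri : Fin k → Fin m) (ci : Fin k → Fin ny),
      Function.Injective ri → Function.Injective ci →
      |(((D.submatrix ri ci).det : ℤ) : ℝ)| ≤ Δ)
    -- `x*, ŷ*` solve the follower-relaxed bilevel problem
    (xstar : X) (yhstar : Fin ny → ℝ)
    (hyhstar : yhstar ∈ P xstar ∧ ∀ y ∈ P xstar, d ⬝ᵥ y ≤ d ⬝ᵥ yhstar)
    (hleaderopt : ∀ x : X, ∀ yh ∈ P x, (∀ y ∈ P x, d ⬝ᵥ y ≤ d ⬝ᵥ yh) →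
      h xstar + d ⬝ᵥ yhstar ≤ h x + d ⬝ᵥ yh)
    -- `y*` maximizes `dᵀy` over `P(x*) ∩ ℤ^{n_y}`
    (ystar : Fin ny → ℝ)
    (hystar : IsInt ystar ∧ ystar ∈ P xstar ∧
      ∀ y, IsInt y → y ∈ P xstar → d ⬝ᵥ y ≤ d ⬝ᵥ ystar) :
    ∀ x : X, ∀ y : Fin ny → ℝ, IsInt y → y ∈ P x →
      (∀ z, IsInt z → z ∈ P x → d ⬝ᵥ z ≤ d ⬝ᵥ y) →
      h xstar + d ⬝ᵥ ystar ≤ h x + d ⬝ᵥ y + 2 * (∑ i, |d i|) * ny * Δ := by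
  intro x y hyI hyP hyopt
  obtain ⟨yh, hyhP, hyhopt⟩ := hmaxR x
  have hlead := hleaderopt x yh hyhP hyhopt
  have hstar := hyhstar.2 ystar hystar.2.1
  have hsum : 0 ≤ ∑ i, |d i| := Finset.sum_nonneg fun i _ => abs_nonneg _
  by_cases hD : D = 0
  · -- Without constraints, a bounded relaxed problem forces `d = 0`.
    have hmem : yh + d ∈ P x := by
      rw [hP] at hyhP ⊢
      subst hD
      intro i
      have := hyhP i
      simpa using this
    have h1 := hyhopt _ hmem
    rw [dotProduct_add] at h1
    have h2 : d = 0 := by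
      have h3 : 0 ≤ d ⬝ᵥ d := Finset.sum_nonneg fun i _ => mul_self_nonneg _
      exact dotProduct_self_eq_zero.mp (le_antisymm (by linarith) h3)
    subst h2
    simp at hlead ⊢
    exact hlead
  · -- A nonzero integer entry is a `1 × 1` subdeterminant of absolute value at least `1`.
    have hΔ1 : 1 ≤ Δ := by
      obtain ⟨i, j, hij⟩ : ∃ i j, D i j ≠ 0 := by
        by_contra hcon
        push Not at hcon
        exact hD (by ext i j; exact hcon i j)
      have h1 := hΔ 1 one_pos (fun _ => i) (fun _ => j)
        (Function.injective_of_subsingleton _) (Function.injective_of_subsingleton _)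
      simp only [Matrix.det_unique, Matrix.submatrix_apply] at h1
      refine le_trans ?_ h1
      exact_mod_cast Int.one_le_abs hij
    have hgap := RelaxedForesight.gap_bound D Δ hΔ1 hΔ d (fun i => (g x i : ℝ)) y yh
      ((hIsInt y).mp hyI) (by rw [hP] at hyP; exact hyP) (by rw [hP] at hyhP; exact hyhP)
      (fun z hzI hz => hyopt z ((hIsInt z).mpr hzI) (by rw [hP]; exact hz))
    have hnn : 0 ≤ (∑ i, |d i|) * ny * Δ :=
      mul_nonneg (mul_nonneg hsum (Nat.cast_nonneg _)) (by linarith)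
    linarith
end

section
/- Approximation guarantee for the Relaxed Foresight Algorithm with an integer-linear follower (many variables, few constraints): for every leader decision x ∈ X and every maximizer y of dᵀy over P(x) ∩ ℤ^{n_y}, the leader's value obtained by the algorithm satisfies h(x*) + dᵀy* ≤ h(x) + dᵀy + 2·‖d‖_∞·m·(2·m·δ(D) + 1)^m. In particular, the algorithm's leader objective exceeds the optimal leader objective of the bilevel program by at most 2·‖d‖_∞·m·(2·m·δ(D) + 1)^m. -/
open Matrix BigOperators

/-!
Since `h x* + dᵀy* ≤ h x* + dᵀŷ* ≤ h x + dᵀŷ` for a relaxed optimum `ŷ` at `x`, everything reduces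
to bounding the integrality gap `dᵀŷ - dᵀy` of the follower's problem at a fixed `x`. This is done by
the Eisenbrand–Weismantel proximity argument, for the system in equality form with columns `[D I]`
(free variables `y`, nonnegative slacks).

* `exists_rounding`: the relaxed solution can be moved, without losing objective value, so that all
  but `m` coordinates are integral and no coordinate crosses an integer.
* `steinitz`: vectors in `ℝ^m` of sup-norm at most `Δ` with sum zero can be ordered so that all
  partial sums have sup-norm at most `m * Δ`. Its proof also rests on `exists_rounding`.
* `card_le_of_no_cycle`: write `x - z` (relaxed minus integral solution) as an integral part `q` plus
  at most `m` fractional coordinates, and split it into signed columns and fractional multiples of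
  columns. In a Steinitz ordering, two partial sums in the same unit cell that have used the same
  fractional vectors cut out an integral kernel vector sign-compatible with `q`. If there is
  no such nonzero vector, pigeonhole bounds the number of vectors by `(m + 1) * (2 * m * Δ + 1) ^ m`.
* `integrality_gap`: adding a sign-compatible kernel vector to an integral optimum `z` keeps it
  feasible, so these vectors have nonpositive objective and may be removed from `q`. What
  remains is short, and each unit of `ℓ¹`-length costs at most `‖d‖_∞`.

As `m + 1 ≤ 2 * m`, this yields the bound whenever `δ ≥ 1`, which the identity columns
require. If `δ < 1` then `D = 0`, and boundedness of the relaxed problem forces `d = 0`.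
-/

/-! ### Rounding to few fractional coordinates -/

/-- Any point can be moved, keeping `∑ x j • a j` and staying between the floor and ceiling of each
coordinate, to a point with at most `finrank V` fractional coordinates whose `c`-value is no smaller.
While there are more, the columns at fractional coordinates are linearly dependent, and
one moves along a relation, in the direction that does not decrease `c`, until a coordinate becomes
integral. -/
lemma exists_rounding {ι V : Type*} [Fintype ι] [AddCommGroup V] [Module ℝ V]
    [FiniteDimensional ℝ V] (a : ι → V) (c x : ι → ℝ) :
    ∃ x' : ι → ℝ, ∑ j, x' j • a j = ∑ j, x j • a j ∧
      (∀ j, (⌊x j⌋ : ℝ) ≤ x' j ∧ x' j ≤ (⌈x j⌉ : ℝ)) ∧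
      ∑ j, c j * x j ≤ ∑ j, c j * x' j ∧
      (Finset.univ.filter fun j => Int.fract (x' j) ≠ 0).card ≤ Module.finrank ℝ V := by
  classical
  induction hN : (Finset.univ.filter fun j => Int.fract (x j) ≠ 0).card using
    Nat.strong_induction_on generalizing x with
  | _ N ih =>
  by_cases hle : N ≤ Module.finrank ℝ V
  · exact ⟨x, rfl, fun j => ⟨Int.floor_le _, Int.le_ceil _⟩, le_rfl, hN ▸ hle⟩
  set F := Finset.univ.filter fun j => Int.fract (x j) ≠ 0 with hF
  -- a linear relation among the columns indexed by fractional coordinates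
  obtain ⟨u, hu0, hurel, hucne, huc⟩ : ∃ u : ι → ℝ, (∀ j ∉ F, u j = 0) ∧ ∑ j, u j • a j = 0 ∧
      (∃ j, u j ≠ 0) ∧ 0 ≤ ∑ j, c j * u j := by
    have hdep : ¬ LinearIndependent ℝ (fun j : F => a j) := by
      intro hli
      have := hli.fintype_card_le_finrank
      rw [Fintype.card_coe] at this
      omega
    obtain ⟨v, hv, ⟨j₀, hj₀⟩, hvne⟩ := Fintype.not_linearIndependent_iff.1 hdep
    let u : ι → ℝ := fun j => if hj : j ∈ F then v ⟨j, hj⟩ else 0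
    have h0 : ∀ j ∉ F, u j = 0 := fun j hj => by simp [u, hj]
    have hrel : ∑ j, u j • a j = 0 := by
      rw [← hv, ← Finset.sum_subset (Finset.subset_univ F)
        (fun j _ hj => by rw [h0 j hj, zero_smul]), ← Finset.sum_coe_sort]
      exact Finset.sum_congr rfl fun j _ => by simp [u]
    have hne : u j₀ ≠ 0 := by simpa [u, hj₀] using hvne
    rcases le_total 0 (∑ j, c j * u j) with hc | hc
    · exact ⟨u, h0, hrel, ⟨j₀, hne⟩, hc⟩
    · refine ⟨-u, fun j hj => by simp [h0 j hj], by simp [hrel], ⟨j₀, by simpa using hne⟩, ?_⟩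
      simpa using hc
  -- the time at which coordinate `j` reaches an integer when moving along `u`
  let τ : ι → ℝ := fun j => if 0 < u j then (⌈x j⌉ - x j) / u j else (x j - ⌊x j⌋) / (-u j)
  obtain ⟨j₀, hj₀, hmin⟩ := Finset.exists_min_image (Finset.univ.filter fun j => u j ≠ 0) τ
    (by obtain ⟨j, hj⟩ := hucne; exact ⟨j, by simpa using hj⟩)
  simp only [Finset.mem_filter, Finset.mem_univ, true_and] at hj₀ hmin
  have hτ : ∀ j, 0 ≤ τ j := by
    intro j
    simp only [τ]
    split_ifs with hj
    · exact div_nonneg (sub_nonneg.2 (Int.le_ceil _)) hj.le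
    · exact div_nonneg (sub_nonneg.2 (Int.floor_le _)) (by linarith)
  set t := τ j₀ with ht
  have ht0 : 0 ≤ t := hτ j₀
  set y : ι → ℝ := fun j => x j + t * u j with hy
  have hbd : ∀ j, (⌊x j⌋ : ℝ) ≤ y j ∧ y j ≤ (⌈x j⌉ : ℝ) := by
    intro j
    have h1 := Int.floor_le (x j)
    have h2 := Int.le_ceil (x j)
    simp only [hy]
    rcases lt_trichotomy (u j) 0 with hj | hj | hj
    · have := hmin j hj.ne
      simp only [τ, if_neg hj.not_gt] at this
      rw [le_div_iff₀ (by linarith)] at this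
      constructor <;> nlinarith
    · simp [hj, h1, h2]
    · have := hmin j hj.ne'
      simp only [τ, if_pos hj] at this
      rw [le_div_iff₀ hj] at this
      constructor <;> nlinarith
  have hint : Int.fract (y j₀) = 0 := by
    rcases lt_or_gt_of_ne hj₀ with hj | hj
    · have : y j₀ = (⌊x j₀⌋ : ℝ) := by
        simp only [hy, ht, τ, if_neg hj.not_gt]
        field_simp
        ring
      rw [this, Int.fract_intCast]
    · have : y j₀ = (⌈x j₀⌉ : ℝ) := by
        simp only [hy, ht, τ, if_pos hj]
        field_simp
        ring
      rw [this, Int.fract_intCast]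
  have hlt : (Finset.univ.filter fun j => Int.fract (y j) ≠ 0).card < N := by
    rw [← hN]
    refine Finset.card_lt_card ((Finset.ssubset_iff_of_subset ?_).2 ⟨j₀, ?_, ?_⟩)
    · intro j hj
      by_contra hjF
      have : y j = x j := by simp [hy, hu0 j hjF]
      simp only [Finset.mem_filter, Finset.mem_univ, true_and, this] at hj
      exact hjF (by simpa [hF] using hj)
    · by_contra hjF
      exact hj₀ (hu0 _ hjF)
    · simp [hint]
  obtain ⟨x', hx1, hx2, hx3, hx4⟩ := ih _ hlt y rfl
  refine ⟨x', ?_, fun j => ⟨?_, ?_⟩, ?_, hx4⟩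
  · rw [hx1]
    simp only [hy, add_smul, Finset.sum_add_distrib, mul_smul, ← Finset.smul_sum, hurel]
    simp
  · refine le_trans ?_ (hx2 j).1
    exact_mod_cast Int.le_floor.2 (hbd j).1
  · refine (hx2 j).2.trans ?_
    exact_mod_cast Int.ceil_le.2 (hbd j).2
  · refine le_trans ?_ hx3
    have : ∑ j, c j * y j = ∑ j, c j * x j + t * ∑ j, c j * u j := by
      rw [Finset.mul_sum, ← Finset.sum_add_distrib]
      exact Finset.sum_congr rfl fun j _ => by simp only [hy]; ring
    rw [this]
    nlinarith

/-! ### The Steinitz lemma -/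

/-- The invariant of the Steinitz ordering: `T` has at most `m` elements, or it carries weights in
`[0, 1]`, extended by zero outside `T`, with weighted sum of the `w k` zero and total weight
`card T - m`. -/
def SteinitzGood {κ : Type*} [Fintype κ] {m : ℕ} (w : κ → Fin m → ℝ) (T : Finset κ) : Prop :=
  T.card ≤ m ∨ ∃ l : κ → ℝ, (∀ k, 0 ≤ l k ∧ l k ≤ 1) ∧ (∀ k ∉ T, l k = 0) ∧
    ∑ k, l k • w k = 0 ∧ ∑ k, l k = (T.card : ℝ) - m

/-- With weights `l`, the sum over `T` equals the sum weighted by `1 - l`, whose total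
weight is `m`. -/
lemma SteinitzGood.abs_sum_le {κ : Type*} [Fintype κ] {m : ℕ} {w : κ → Fin m → ℝ}
    {T : Finset κ} (hT : SteinitzGood w T) {Δ : ℝ} (hΔ : 0 ≤ Δ) (hw : ∀ k i, |w k i| ≤ Δ)
    (i : Fin m) : |∑ k ∈ T, w k i| ≤ m * Δ := by
  rcases hT with hT | ⟨l, hl, hl0, hrel, hsum⟩
  · calc |∑ k ∈ T, w k i| ≤ ∑ k ∈ T, |w k i| := Finset.abs_sum_le_sum_abs _ _
      _ ≤ ∑ k ∈ T, Δ := Finset.sum_le_sum fun k _ => hw k i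
      _ = T.card * Δ := by simp
      _ ≤ m * Δ := by gcongr
  · have h1 : ∑ k ∈ T, l k * w k i = 0 := by
      have := congrFun hrel i
      simp only [Finset.sum_apply, Pi.smul_apply, smul_eq_mul, Pi.zero_apply] at this
      rw [← this]
      exact Finset.sum_subset (Finset.subset_univ T) fun k _ hk => by simp [hl0 k hk]
    have h2 : ∑ k ∈ T, l k = (T.card : ℝ) - m := by
      rw [← hsum]
      exact Finset.sum_subset (Finset.subset_univ T) fun k _ hk => hl0 k hk
    calc |∑ k ∈ T, w k i| = |∑ k ∈ T, (1 - l k) * w k i| := by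
          simp only [sub_mul, one_mul, Finset.sum_sub_distrib, h1, sub_zero]
      _ ≤ ∑ k ∈ T, |(1 - l k) * w k i| := Finset.abs_sum_le_sum_abs _ _
      _ ≤ ∑ k ∈ T, (1 - l k) * Δ := Finset.sum_le_sum fun k _ => by
          have := (hl k).2
          rw [abs_mul, abs_of_nonneg (by linarith)]
          exact mul_le_mul_of_nonneg_left (hw k i) (by linarith)
      _ = m * Δ := by
          rw [← Finset.sum_mul, Finset.sum_sub_distrib, h2]
          simp

/-- Scaling the weights down to total `card T - 1 - m` and rounding leaves at most `m + 1` fractional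
weights. If none of the weights on `T` vanished, the total of `1 - l'`, which is `m + 1`, would be a sum
of at most `m + 1` terms less than one. So some weight vanishes, and its index can be dropped. -/
lemma SteinitzGood.exists_erase {κ : Type*} [Fintype κ] [DecidableEq κ] {m : ℕ}
    {w : κ → Fin m → ℝ} {T : Finset κ} (hT : SteinitzGood w T) (hne : T.Nonempty) :
    ∃ k ∈ T, SteinitzGood w (T.erase k) := by
  by_cases hc : T.card ≤ m
  · obtain ⟨k, hk⟩ := hne
    exact ⟨k, hk, Or.inl ((Finset.card_le_card (Finset.erase_subset _ _)).trans hc)⟩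
  obtain ⟨l, hl, hl0, hrel, hsum⟩ := hT.resolve_left hc
  push Not at hc
  have hcR : (m : ℝ) + 1 ≤ T.card := by exact_mod_cast hc
  -- rescale so that the total weight drops by one
  set s : ℝ := ((T.card : ℝ) - 1 - m) / (T.card - m) with hs
  have hs0 : 0 ≤ s := div_nonneg (by linarith) (by linarith)
  have hs1 : s ≤ 1 := (div_le_one (by linarith)).2 (by linarith)
  obtain ⟨l', h1, h2, -, h4⟩ := exists_rounding (V := (Fin m → ℝ) × ℝ)
    (fun k => (w k, (1 : ℝ))) (fun _ => 0) (fun k => s * l k)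
  have hl' : ∀ k, 0 ≤ l' k ∧ l' k ≤ 1 := by
    intro k
    have a0 : 0 ≤ s * l k := mul_nonneg hs0 (hl k).1
    have a1 : s * l k ≤ 1 := mul_le_one₀ hs1 (hl k).1 (hl k).2
    refine ⟨le_trans ?_ (h2 k).1, (h2 k).2.trans ?_⟩
    · exact_mod_cast Int.floor_nonneg.2 a0
    · have : ⌈s * l k⌉ ≤ 1 := Int.ceil_le.2 (by simpa using a1)
      exact_mod_cast this
  have hl'0 : ∀ k ∉ T, l' k = 0 := by
    intro k hk
    have := h2 k
    simp only [hl0 k hk, mul_zero, Int.floor_zero, Int.ceil_zero, Int.cast_zero] at this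
    exact le_antisymm this.2 this.1
  have hrel' : ∑ k, l' k • w k = 0 := by
    have := congrArg Prod.fst h1
    simp only [Prod.fst_sum, Prod.smul_fst, mul_smul, ← Finset.smul_sum, hrel] at this
    simpa using this
  have hsum' : ∑ k, l' k = (T.card : ℝ) - 1 - m := by
    have := congrArg Prod.snd h1
    simp only [Prod.snd_sum, Prod.smul_snd, smul_eq_mul, mul_one, ← Finset.mul_sum, hsum] at this
    rw [this, hs]
    exact div_mul_cancel₀ _ (by linarith)
  obtain ⟨k, hk, hk0⟩ : ∃ k ∈ T, l' k = 0 := by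
    by_contra! hpos
    set G := Finset.univ.filter fun k => Int.fract (l' k) ≠ 0 with hG
    have hGT : G ⊆ T := by
      intro k hk
      by_contra hkT
      simp [hG, hl'0 k hkT] at hk
    have hGc : (G.card : ℝ) ≤ m + 1 := by
      have : Module.finrank ℝ ((Fin m → ℝ) × ℝ) = m + 1 := by simp
      rw [this] at h4
      exact_mod_cast h4
    have e1 : ∑ k ∈ T, (1 - l' k) = m + 1 := by
      have : ∑ k ∈ T, l' k = (T.card : ℝ) - 1 - m := by
        rw [← hsum']
        exact Finset.sum_subset (Finset.subset_univ T) fun k _ hk => hl'0 k hk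
      rw [Finset.sum_sub_distrib, this]
      simp
      ring
    have e2 : ∑ k ∈ G, (1 - l' k) = m + 1 := by
      rw [← e1]
      refine Finset.sum_subset hGT fun k hkT hkG => ?_
      have hfr : Int.fract (l' k) = 0 := by simpa [hG] using hkG
      have hpos' : 0 < l' k := lt_of_le_of_ne (hl' k).1 (Ne.symm (hpos k hkT))
      by_contra hne1
      have hlt1 : l' k < 1 := lt_of_le_of_ne (hl' k).2 fun h => hne1 (by rw [h]; ring)
      rw [Int.fract_eq_self.2 ⟨hpos'.le, hlt1⟩] at hfr
      exact hpos'.ne' hfr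
    rcases G.eq_empty_or_nonempty with hGe | hGn
    · rw [hGe, Finset.sum_empty] at e2
      have : (0 : ℝ) ≤ m := Nat.cast_nonneg m
      linarith
    · have : ∑ k ∈ G, (1 - l' k) < ∑ k ∈ G, (1 : ℝ) :=
        Finset.sum_lt_sum_of_nonempty hGn fun k hk => by
          have := lt_of_le_of_ne (hl' k).1 (Ne.symm (hpos k (hGT hk)))
          linarith
      simp only [Finset.sum_const, nsmul_eq_mul, mul_one] at this
      linarith
  refine ⟨k, hk, Or.inr ⟨l', hl', fun j hj => ?_, hrel', ?_⟩⟩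
  · by_cases hjk : j = k
    · rw [hjk, hk0]
    · exact hl'0 j fun hjT => hj (Finset.mem_erase.2 ⟨hjk, hjT⟩)
  · rw [hsum', Finset.card_erase_of_mem hk, Nat.cast_sub (by omega)]
    simp

lemma SteinitzGood.exists_chain {κ : Type*} [Fintype κ] [DecidableEq κ] {m : ℕ}
    {w : κ → Fin m → ℝ} (N : ℕ) (T : Finset κ) (hN : T.card = N) (hT : SteinitzGood w T) :
    ∃ S : ℕ → Finset κ, Monotone S ∧ (∀ k, S k ⊆ T) ∧
      ∀ k ≤ N, (S k).card = k ∧ SteinitzGood w (S k) := by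
  induction N generalizing T with
  | zero =>
    refine ⟨fun _ => T, monotone_const, fun _ => subset_rfl, fun k hk => ⟨?_, hT⟩⟩
    change T.card = k
    omega
  | succ N ih =>
    obtain ⟨k, hk, hgood⟩ := hT.exists_erase (Finset.card_pos.1 (by omega))
    obtain ⟨S, hmono, hsub, hS⟩ := ih (T.erase k)
      (by rw [Finset.card_erase_of_mem hk]; omega) hgood
    have hsub' : ∀ j, S j ⊆ T := fun j => (hsub j).trans (Finset.erase_subset _ _)
    refine ⟨fun j => if j ≤ N then S j else T, ?_, ?_, ?_⟩
    · intro i j hij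
      by_cases hj : j ≤ N
      · simpa [hj, hij.trans hj] using hmono hij
      · by_cases hi : i ≤ N
        · simpa [hi, hj] using hsub' i
        · simp [hi, hj]
    · intro j
      by_cases hj : j ≤ N
      · simpa [hj] using hsub' j
      · simp [hj]
    · intro j hj
      by_cases hjN : j ≤ N
      · simpa [hjN] using hS j hjN
      · have : j = N + 1 := by omega
        simpa [hjN, this, hN] using hT

/-- Steinitz lemma for the sup-norm on `ℝ^m` with constant `m`. The ordering of the vectors is
encoded by the increasing chain `S n` of its initial segments. -/
lemma steinitz {κ : Type*} [Fintype κ] [DecidableEq κ] {m : ℕ} (w : κ → Fin m → ℝ)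
    (hsum : ∑ k, w k = 0) {Δ : ℝ} (hΔ : 0 ≤ Δ) (hw : ∀ k i, |w k i| ≤ Δ) :
    ∃ S : ℕ → Finset κ, Monotone S ∧ ∀ n ≤ Fintype.card κ, (S n).card = n ∧
      ∀ i, |∑ k ∈ S n, w k i| ≤ m * Δ := by
  have hgood : SteinitzGood w Finset.univ := by
    by_cases hc : Fintype.card κ ≤ m
    · exact Or.inl hc
    push Not at hc
    have hcR : (m : ℝ) < Fintype.card κ := by exact_mod_cast hc
    -- constant weights of total `card κ - m`
    refine Or.inr ⟨fun _ => 1 - m / Fintype.card κ, fun k => ⟨?_, ?_⟩, by simp, ?_, ?_⟩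
    · rw [sub_nonneg]
      exact div_le_one_of_le₀ hcR.le (by positivity)
    · have : (0 : ℝ) ≤ m / Fintype.card κ := by positivity
      linarith
    · rw [← Finset.smul_sum, hsum, smul_zero]
    · have : (Fintype.card κ : ℝ) ≠ 0 := by
        have : (0 : ℝ) ≤ m := Nat.cast_nonneg m
        linarith
      simp only [Finset.sum_const, Finset.card_univ, nsmul_eq_mul]
      field_simp
  obtain ⟨S, hmono, -, hS⟩ := hgood.exists_chain _ _ rfl
  exact ⟨S, hmono, fun n hn => ⟨(hS n hn).1, (hS n hn).2.abs_sum_le hΔ hw⟩⟩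

/-! ### Counting vectors in a cycle-free decomposition -/

/-- `u` is conformal to `q`: each coordinate of `u` lies between `0` and that of `q`. -/
def IsConformal {ι : Type*} (u q : ι → ℤ) : Prop :=
  ∀ j, (0 ≤ u j ∧ u j ≤ q j) ∨ (q j ≤ u j ∧ u j ≤ 0)

/-- If `q + f` is in the kernel, with `f` fractional and supported on `F`, and no nonzero integral
kernel vector is conformal to `q`, then `‖q‖₁` is bounded independently of the number of columns. -/
lemma card_le_of_no_cycle {ι : Type*} [Fintype ι] {m : ℕ} (A : ι → Fin m → ℤ) {Δ : ℝ}
    (hΔ : 0 ≤ Δ) (hA : ∀ j i, |(A j i : ℝ)| ≤ Δ) (q : ι → ℤ) (f : ι → ℝ)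
    (hf : ∀ j, 0 ≤ f j ∧ f j ≤ 1) (F : Finset ι) (hF : ∀ j ∉ F, f j = 0)
    (hsum : ∀ i, ∑ j, ((q j : ℝ) + f j) * A j i = 0)
    (hmin : ∀ u : ι → ℤ, IsConformal u q → (∀ i, ∑ j, u j * A j i = 0) → u = 0) :
    (F.card : ℝ) + (∑ j, (q j).natAbs : ℕ) + 1 ≤ (F.card + 1) * (2 * m * Δ + 1) ^ m := by
  classical
  -- the vectors to be ordered: `f j • A j` for `j ∈ F`, and `|q j|` copies of `sign (q j) • A j`
  let w : F ⊕ (Σ j, Fin (q j).natAbs) → Fin m → ℝ :=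
    Sum.elim (fun j i => f j * A j i) (fun p i => ((q p.1).sign : ℝ) * A p.1 i)
  have hw : ∀ k i, |w k i| ≤ Δ := by
    rintro (j | p) i
    · simp only [w, Sum.elim_inl, abs_mul, abs_of_nonneg (hf j).1]
      exact (mul_le_of_le_one_left (abs_nonneg _) (hf j).2).trans (hA _ _)
    · simp only [w, Sum.elim_inr, abs_mul]
      refine (mul_le_of_le_one_left (abs_nonneg _) ?_).trans (hA _ _)
      have : |(q p.1).sign| ≤ 1 := by
        rcases Int.sign_trichotomy (q p.1) with h | h | h <;> simp [h]
      exact_mod_cast this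
  have hw0 : ∑ k, w k = 0 := by
    funext i
    rw [Finset.sum_apply, Fintype.sum_sum_type, Fintype.sum_sigma, Pi.zero_apply, ← hsum i]
    simp only [w, Sum.elim_inl, Sum.elim_inr, Finset.sum_const, Finset.card_univ,
      Fintype.card_fin, nsmul_eq_mul, add_mul, Finset.sum_add_distrib]
    rw [add_comm]
    congr 1
    · refine Finset.sum_congr rfl fun j _ => ?_
      rw [← mul_assoc]
      congr 1
      have := Int.sign_mul_natAbs (q j)
      rw [mul_comm] at this
      rw [← Int.cast_natCast, ← Int.cast_mul, this]
    · rw [Finset.sum_coe_sort F (fun j => f j * (A j i : ℝ))]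
      exact Finset.sum_subset (Finset.subset_univ F) fun j _ hj => by simp [hF j hj]
  obtain ⟨S, hmono, hS⟩ := steinitz w hw0 hΔ hw
  have hcard : Fintype.card (F ⊕ (Σ j, Fin (q j).natAbs)) =
      F.card + ∑ j, (q j).natAbs := by
    simp
  set N := F.card + ∑ j, (q j).natAbs with hN
  rw [hcard] at hS
  have hmΔ : (0 : ℝ) ≤ m * Δ := by positivity
  let B : ℕ := ⌊2 * m * Δ⌋₊ + 1
  -- the number of fractional vectors among the first `n`
  let r : ℕ → ℕ := fun n => (S n).toLeft.card
  have hr : ∀ n, r n < F.card + 1 := fun n => by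
    have := Finset.card_le_univ (S n).toLeft
    simp only [Fintype.card_coe] at this
    simp only [r]
    omega
  -- the unit cell containing the `n`-th partial sum, shifted into the nonnegative orthant
  let cell : ℕ → Fin m → ℕ := fun n i => ⌊∑ k ∈ S n, w k i + m * Δ⌋₊
  have hcell : ∀ n ≤ N, ∀ i, cell n i < B := by
    intro n hn i
    refine Nat.lt_succ_of_le (Nat.floor_le_floor ?_)
    have := (abs_le.1 ((hS n hn).2 i)).2
    linarith
  have hno : ∀ n ≤ N, ∀ n' ≤ N, n < n' → r n = r n' → cell n = cell n' → False := by
    intro n hn n' hn' hlt hrr hcc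
    have hsub : S n ⊆ S n' := hmono hlt.le
    have hleft : (S n).toLeft = (S n').toLeft :=
      Finset.eq_of_subset_of_card_le (Finset.toLeft_subset_toLeft hsub) hrr.ge
    set C : Finset (Σ j, Fin (q j).natAbs) := (S n').toRight \ (S n).toRight with hC
    have hCw : ∀ i, ∑ k ∈ S n', w k i - ∑ k ∈ S n, w k i =
        ∑ p ∈ C, ((q p.1).sign : ℝ) * A p.1 i := by
      intro i
      rw [Finset.sum_sum_eq_sum_toLeft_add_sum_toRight,
        Finset.sum_sum_eq_sum_toLeft_add_sum_toRight, hleft, hC,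
        Finset.sum_sdiff_eq_sub (Finset.toRight_subset_toRight hsub)]
      simp only [w, Sum.elim_inr]
      ring
    -- the vectors between the two positions form an integral cycle `u`
    let cnt : ι → ℕ := fun j =>
      (Finset.univ.filter fun a => (⟨j, a⟩ : Σ j, Fin (q j).natAbs) ∈ C).card
    have hcnt : ∀ j, cnt j ≤ (q j).natAbs := fun j =>
      (Finset.card_le_univ _).trans (by simp)
    let u : ι → ℤ := fun j => cnt j * (q j).sign
    have hu : ∀ i, ∑ p ∈ C, (q p.1).sign * A p.1 i = ∑ j, u j * A j i := by
      intro i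
      have : C = Finset.univ.sigma fun j =>
          (Finset.univ.filter fun a => (⟨j, a⟩ : Σ j, Fin (q j).natAbs) ∈ C) := by
        ext ⟨j, a⟩
        simp
      rw [this, Finset.sum_sigma]
      refine Finset.sum_congr rfl fun j _ => ?_
      simp only [Finset.sum_const, nsmul_eq_mul, u, cnt, mul_assoc]
    have huconf : IsConformal u q := by
      intro j
      have h1 := hcnt j
      simp only [u]
      rcases lt_trichotomy (q j) 0 with h | h | h
      · right
        rw [Int.sign_eq_neg_one_of_neg h]
        omega
      · left
        simp [h]
      · left
        rw [Int.sign_eq_one_of_pos h]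
        omega
    have hurel : ∀ i, ∑ j, u j * A j i = 0 := by
      intro i
      have e1 := hCw i
      have e2 : ∑ p ∈ C, ((q p.1).sign : ℝ) * A p.1 i = ((∑ j, u j * A j i : ℤ) : ℝ) := by
        rw [← hu i]
        push_cast
        rfl
      rw [e2] at e1
      -- both partial sums lie in the same unit cell and differ by an integer
      have hc := congrFun hcc i
      simp only [cell] at hc
      have p1 := (abs_le.1 ((hS n hn).2 i)).1
      have p2 := (abs_le.1 ((hS n' hn').2 i)).1
      have l1 := Nat.floor_le (show 0 ≤ ∑ k ∈ S n, w k i + m * Δ by linarith)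
      have l2 := Nat.floor_le (show 0 ≤ ∑ k ∈ S n', w k i + m * Δ by linarith)
      have g1 := Nat.lt_floor_add_one (∑ k ∈ S n, w k i + m * Δ)
      have g2 := Nat.lt_floor_add_one (∑ k ∈ S n', w k i + m * Δ)
      rw [hc] at l1 g1
      have a1 : ((∑ j, u j * A j i : ℤ) : ℝ) < 1 := by linarith
      have a2 : (-1 : ℝ) < ((∑ j, u j * A j i : ℤ) : ℝ) := by linarith
      have b1 : (∑ j, u j * A j i : ℤ) < 1 := by exact_mod_cast a1
      have b2 : (-1 : ℤ) < (∑ j, u j * A j i : ℤ) := by exact_mod_cast a2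
      omega
    have hu0 := hmin u huconf hurel
    have hCne : C.Nonempty := by
      rw [Finset.nonempty_iff_ne_empty]
      intro hCe
      rw [hC, Finset.sdiff_eq_empty_iff_subset] at hCe
      have c1 := Finset.card_toLeft_add_card_toRight (u := S n)
      have c2 := Finset.card_toLeft_add_card_toRight (u := S n')
      have c3 := Finset.card_le_card hCe
      rw [(hS n hn).1] at c1
      rw [(hS n' hn').1] at c2
      rw [hleft] at c1
      omega
    obtain ⟨⟨j, a⟩, hp⟩ := hCne
    have hcpos : 0 < cnt j := Finset.card_pos.2 ⟨a, by simpa using hp⟩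
    have hq : q j ≠ 0 := by
      intro h
      have := a.2
      simp [h] at this
    have := congrFun hu0 j
    simp only [u, Pi.zero_apply, mul_eq_zero, Int.sign_eq_zero_iff_zero] at this
    rcases this with h | h
    · have : cnt j = 0 := by exact_mod_cast h
      omega
    · exact hq h
  have hcount : N + 1 ≤ (F.card + 1) * B ^ m := by
    let φ : Fin (N + 1) → Fin (F.card + 1) × (Fin m → Fin B) := fun n =>
      (⟨r n, hr n⟩, fun i => ⟨cell n i, hcell n (Nat.lt_succ_iff.1 n.2) i⟩)
    have hφ : Function.Injective φ := by
      intro n n' h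
      have h1 : r n = r n' := by simpa [φ] using congrArg (fun p => (p.1 : ℕ)) h
      have h2 : cell n = cell n' := by
        funext i
        simpa [φ] using congrArg (fun p => ((p.2 i : Fin B) : ℕ)) h
      rcases lt_trichotomy (n : ℕ) n' with hlt | heq | hlt
      · exact (hno n (Nat.lt_succ_iff.1 n.2) n' (Nat.lt_succ_iff.1 n'.2) hlt h1 h2).elim
      · exact Fin.ext heq
      · exact (hno n' (Nat.lt_succ_iff.1 n'.2) n (Nat.lt_succ_iff.1 n.2) hlt h1.symm h2.symm).elim
    have := Fintype.card_le_of_injective φ hφ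
    simpa using this
  have hB : (B : ℝ) ≤ 2 * m * Δ + 1 := by
    have := Nat.floor_le (show 0 ≤ 2 * m * Δ by linarith)
    simp only [B]
    push_cast
    linarith
  calc (F.card : ℝ) + (∑ j, (q j).natAbs : ℕ) + 1 = ((N + 1 : ℕ) : ℝ) := by
        rw [hN]; push_cast; ring
    _ ≤ (((F.card + 1) * B ^ m : ℕ) : ℝ) := by exact_mod_cast hcount
    _ = (F.card + 1) * (B : ℝ) ^ m := by push_cast; ring
    _ ≤ (F.card + 1) * (2 * m * Δ + 1) ^ m := by gcongr

/-! ### The integrality gap -/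

/-- The value of any feasible real point `x` exceeds that of an integral optimum `z` by at most
`C * (m + 1) * (2 * m * Δ + 1) ^ m`. The program is in equality form, with nonnegativity required
only for the variables in `S`; its right-hand side is the common value of `∑ x j * A j` and
`∑ z j * A j`. -/
lemma integrality_gap {ι : Type*} [Fintype ι] {m : ℕ} (A : ι → Fin m → ℤ) {Δ : ℝ}
    (hΔ : 0 ≤ Δ) (hA : ∀ j i, |(A j i : ℝ)| ≤ Δ) (c : ι → ℝ) {C : ℝ} (hC0 : 0 ≤ C)
    (hC : ∀ j, |c j| ≤ C) (S : Set ι) (x : ι → ℝ) (z : ι → ℤ)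
    (hx : ∀ j ∈ S, 0 ≤ x j) (hz : ∀ j ∈ S, 0 ≤ z j)
    (hxz : ∀ i, ∑ j, x j * A j i = ∑ j, (z j : ℝ) * A j i)
    (hopt : ∀ z' : ι → ℤ, (∀ j ∈ S, 0 ≤ z' j) →
      (∀ i, ∑ j, z' j * A j i = ∑ j, z j * A j i) → ∑ j, c j * z' j ≤ ∑ j, c j * z j) :
    ∑ j, c j * x j ≤ ∑ j, c j * z j + C * ((m + 1) * (2 * m * Δ + 1) ^ m) := by
  classical
  obtain ⟨x', h1, h2, h3, h4⟩ := exists_rounding (V := Fin m → ℝ) (fun j i => (A j i : ℝ)) c x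
  have hx' : ∀ j ∈ S, 0 ≤ ⌊x' j⌋ := fun j hj =>
    (Int.floor_nonneg.2 (hx j hj)).trans (Int.le_floor.2 (h2 j).1)
  have hx'z : ∀ i, ∑ j, x' j * A j i = ∑ j, (z j : ℝ) * A j i := fun i => by
    rw [← hxz i]
    simpa using congrFun h1 i
  let q₀ : ι → ℤ := fun j => ⌊x' j⌋ - z j
  let Q : Set (ι → ℤ) := {q | IsConformal q q₀ ∧ (∀ i, ∑ j, q j * A j i = ∑ j, q₀ j * A j i) ∧
    ∑ j, c j * q₀ j ≤ ∑ j, c j * q j}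
  -- a shortest element of `Q` is what remains of `q₀` after all cycles are discarded
  have hQ : q₀ ∈ Q := ⟨fun j => by
    rcases le_total 0 (q₀ j) with h | h
    · exact Or.inl ⟨h, le_rfl⟩
    · exact Or.inr ⟨le_rfl, h⟩, fun i => rfl, le_rfl⟩
  obtain ⟨q, ⟨hq1, hq2, hq3⟩, hqmin⟩ := WellFounded.has_min
    (measure fun q : ι → ℤ => ∑ j, (q j).natAbs).wf Q ⟨q₀, hQ⟩
  have hno : ∀ u : ι → ℤ, IsConformal u q → (∀ i, ∑ j, u j * A j i = 0) → u = 0 := by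
    intro u hu hurel
    -- each coordinate of `z + u` lies between those of `z` and `⌊x'⌋`, hence `z + u` is feasible
    have hcu : ∑ j, c j * u j ≤ 0 := by
      have := hopt (z + u) (fun j hj => ?_) (fun i => ?_)
      · simp only [Pi.add_apply, Int.cast_add, mul_add, Finset.sum_add_distrib] at this
        linarith
      · have a1 := hu j
        have a2 := hq1 j
        have a3 := hz j hj
        have a4 := hx' j hj
        simp only [q₀] at a2
        simp only [Pi.add_apply]
        omega
      · simp only [Pi.add_apply, add_mul, Finset.sum_add_distrib, hurel i, add_zero]
    by_contra hne
    obtain ⟨j₀, hj₀⟩ := Function.ne_iff.1 hne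
    refine hqmin (q - u) ⟨fun j => ?_, fun i => ?_, ?_⟩ ?_
    · have a1 := hu j
      have a2 := hq1 j
      simp only [Pi.sub_apply]
      omega
    · simp only [Pi.sub_apply, sub_mul, Finset.sum_sub_distrib, hurel i, sub_zero, hq2 i]
    · simp only [Pi.sub_apply, Int.cast_sub, mul_sub, Finset.sum_sub_distrib]
      linarith
    · change ∑ j, ((q - u) j).natAbs < ∑ j, (q j).natAbs
      refine Finset.sum_lt_sum (fun j _ => ?_) ⟨j₀, Finset.mem_univ _, ?_⟩
      · have a1 := hu j
        simp only [Pi.sub_apply]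
        omega
      · have a1 := hu j₀
        simp only [Pi.sub_apply, Pi.zero_apply] at hj₀ ⊢
        omega
  set F := Finset.univ.filter fun j => Int.fract (x' j) ≠ 0 with hF
  have hFc : (F.card : ℝ) ≤ m := by
    rw [Module.finrank_fin_fun] at h4
    exact_mod_cast h4
  have hF0 : ∀ j ∉ F, Int.fract (x' j) = 0 := fun j hj => by simpa [hF] using hj
  have hsum : ∀ i, ∑ j, ((q j : ℝ) + Int.fract (x' j)) * A j i = 0 := by
    intro i
    have e : ∑ j, (q j : ℝ) * A j i = ∑ j, (q₀ j : ℝ) * A j i := by exact_mod_cast hq2 i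
    simp only [add_mul, Finset.sum_add_distrib, e]
    rw [← Finset.sum_add_distrib, ← sub_eq_zero.2 (hx'z i), ← Finset.sum_sub_distrib]
    refine Finset.sum_congr rfl fun j _ => ?_
    simp only [q₀, Int.fract]
    push_cast
    ring
  have hcard := card_le_of_no_cycle A hΔ hA q (fun j => Int.fract (x' j))
    (fun j => ⟨Int.fract_nonneg _, (Int.fract_lt_one _).le⟩) F hF0 hsum hno
  have hfr : ∑ j, c j * Int.fract (x' j) ≤ C * F.card := by
    calc ∑ j, c j * Int.fract (x' j) = ∑ j ∈ F, c j * Int.fract (x' j) :=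
          (Finset.sum_subset (Finset.subset_univ F) fun j _ hj => by simp [hF0 j hj]).symm
      _ ≤ ∑ j ∈ F, C := Finset.sum_le_sum fun j _ => by
          have a1 := (le_abs_self _).trans (hC j)
          have a2 := Int.fract_nonneg (x' j)
          have a3 := (Int.fract_lt_one (x' j)).le
          nlinarith
      _ = C * F.card := by simp [mul_comm]
  have hqb : ∑ j, c j * q j ≤ C * (∑ j, (q j).natAbs : ℕ) := by
    rw [Nat.cast_sum, Finset.mul_sum]
    refine Finset.sum_le_sum fun j _ => ?_
    rw [Nat.cast_natAbs, Int.cast_abs]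
    calc c j * q j ≤ |c j * q j| := le_abs_self _
      _ = |c j| * |(q j : ℝ)| := abs_mul _ _
      _ ≤ C * |(q j : ℝ)| := by gcongr; exact hC j
  have hdec : ∑ j, c j * x' j =
      ∑ j, c j * z j + ∑ j, c j * q₀ j + ∑ j, c j * Int.fract (x' j) := by
    rw [← Finset.sum_add_distrib, ← Finset.sum_add_distrib]
    refine Finset.sum_congr rfl fun j _ => ?_
    simp only [q₀, Int.fract]
    push_cast
    ring
  have hpow : (0 : ℝ) ≤ (2 * m * Δ + 1) ^ m := by positivity
  have hfin : (F.card : ℝ) + (∑ j, (q j).natAbs : ℕ) ≤ (m + 1) * (2 * m * Δ + 1) ^ m := by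
    nlinarith
  have := mul_le_mul_of_nonneg_left hfin hC0
  rw [mul_add] at this
  linarith

/-! ### The approximation guarantee -/

/-- Approximation guarantee for the Relaxed Foresight Algorithm with an
integer-linear follower (many variables, few constraints): the leader's value
obtained by the algorithm exceeds the value of any bilevel-feasible
leader–follower pair by at most `2 * ‖d‖_∞ * m * (2 * m * δ(D) + 1) ^ m`,
where `δ(D)` bounds the absolute values of the entries of the integral matrix
`D` and `m` is its number of rows. -/
theorem relaxed_foresight_linear_follower_entry_bound_guarantee
    (nx ny m : ℕ) (hnx : 0 < nx) (hny : 0 < ny) (hm : 0 < m)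
    -- leader's decisions
    (X : Type) (hX : Nonempty X)
    (h : X → ℝ)
    -- follower's (and leader's, negated) linear objective
    (d : Fin ny → ℝ)
    -- follower's constraint data: integral matrix `D`, integer-valued `g`
    (D : Matrix (Fin m) (Fin ny) ℤ)
    (g : X → Fin m → ℤ)
    -- follower's relaxed feasible set `P x = {y | g x + D y ≤ 0}`
    (P : X → Set (Fin ny → ℝ))
    (hP : ∀ x, P x = {y : Fin ny → ℝ |
      ∀ i, (g x i : ℝ) + (D.map (Int.cast : ℤ → ℝ)).mulVec y i ≤ 0})
    -- integrality predicate
    (IsInt : (Fin ny → ℝ) → Prop)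
    (hIsInt : ∀ y, IsInt y ↔ ∀ i, ∃ w : ℤ, y i = (w : ℝ))
    -- for every `x`, the integer feasible set is nonempty and both the relaxed
    -- and the integer linear program attain finite maxima
    (hfeas : ∀ x : X, ∃ y, IsInt y ∧ y ∈ P x)
    (hmaxR : ∀ x : X, ∃ yh ∈ P x, ∀ y ∈ P x, d ⬝ᵥ y ≤ d ⬝ᵥ yh)
    (hmaxZ : ∀ x : X, ∃ yt, IsInt yt ∧ yt ∈ P x ∧
      ∀ y, IsInt y → y ∈ P x → d ⬝ᵥ y ≤ d ⬝ᵥ yt)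
    -- `δ` bounds the absolute values of the entries of `D`
    (δ : ℝ)
    (hδ : ∀ i j, |((D i j : ℤ) : ℝ)| ≤ δ)
    -- `x*, ŷ*` solve the follower-relaxed bilevel problem
    (xstar : X) (yhstar : Fin ny → ℝ)
    (hyhstar : yhstar ∈ P xstar ∧ ∀ y ∈ P xstar, d ⬝ᵥ y ≤ d ⬝ᵥ yhstar)
    (hleaderopt : ∀ x : X, ∀ yh ∈ P x, (∀ y ∈ P x, d ⬝ᵥ y ≤ d ⬝ᵥ yh) →
      h xstar + d ⬝ᵥ yhstar ≤ h x + d ⬝ᵥ yh)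
    -- `y*` maximizes `dᵀy` over `P(x*) ∩ ℤ^{n_y}`
    (ystar : Fin ny → ℝ)
    (hystar : IsInt ystar ∧ ystar ∈ P xstar ∧
      ∀ y, IsInt y → y ∈ P xstar → d ⬝ᵥ y ≤ d ⬝ᵥ ystar) :
    ∀ x : X, ∀ y : Fin ny → ℝ, IsInt y → y ∈ P x →
      (∀ z, IsInt z → z ∈ P x → d ⬝ᵥ z ≤ d ⬝ᵥ y) →
      h xstar + d ⬝ᵥ ystar ≤ h x + d ⬝ᵥ y +
        2 * (⨆ i, |d i|) * m * (2 * m * δ + 1) ^ m := by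
  intro x y hyI hyP hyopt
  obtain ⟨yh, hyhP, hyhopt⟩ := hmaxR x
  have hstar : d ⬝ᵥ ystar ≤ d ⬝ᵥ yhstar := hyhstar.2 _ hystar.2.1
  have hlead := hleaderopt x yh hyhP hyhopt
  have hδ0 : 0 ≤ δ := (abs_nonneg _).trans (hδ ⟨0, hm⟩ ⟨0, hny⟩)
  have hsup : ∀ j, |d j| ≤ ⨆ i, |d i| := fun j =>
    le_ciSup (f := fun i => |d i|) (Set.finite_range _).bddAbove j
  have hsup0 : 0 ≤ ⨆ i, |d i| := (abs_nonneg _).trans (hsup ⟨0, hny⟩)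
  have hm1 : (1 : ℝ) ≤ m := by exact_mod_cast hm
  have hpow : (0 : ℝ) ≤ (2 * m * δ + 1) ^ m := by positivity
  suffices hgap : d ⬝ᵥ yh ≤ d ⬝ᵥ y + 2 * (⨆ i, |d i|) * m * (2 * m * δ + 1) ^ m by linarith
  rcases lt_or_ge δ 1 with hδ1 | hδ1
  · -- here `D = 0`, so the relaxed problem is unconstrained and boundedness forces `d = 0`
    have hD : D = 0 := by
      ext i j
      have : |((D i j : ℤ) : ℝ)| < 1 := (hδ i j).trans_lt hδ1
      have h' : |D i j| < 1 := by exact_mod_cast this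
      simpa using Int.abs_lt_one_iff.1 h'
    have hmem : yh + d ∈ P x := by
      rw [hP] at hyhP ⊢
      simpa [hD] using hyhP
    have hdd := hyhopt _ hmem
    rw [dotProduct_add] at hdd
    have hd0 : d = 0 := by
      refine dotProduct_self_eq_zero.1 (le_antisymm (by linarith) ?_)
      exact Finset.sum_nonneg fun i _ => mul_self_nonneg _
    have hnn : 0 ≤ 2 * (⨆ i, |d i|) * m * (2 * m * δ + 1) ^ m := by positivity
    have e1 : d ⬝ᵥ yh = 0 := by rw [hd0, zero_dotProduct]
    have e2 : d ⬝ᵥ y = 0 := by rw [hd0, zero_dotProduct]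
    linarith
  · choose z hz using (hIsInt y).1 hyI
    have hzR : y = fun j => (z j : ℝ) := funext hz
    rw [hP, Set.mem_ofPred_eq] at hyhP hyP
    simp only [mulVec, dotProduct, map_apply] at hyhP hyP
    -- equality form: the columns of `[D I]`, with slack variables indexed by the rows
    let A : Fin ny ⊕ Fin m → Fin m → ℤ :=
      Sum.elim (fun j i => D i j) (fun k i => if k = i then 1 else 0)
    have hA : ∀ j i, |(A j i : ℝ)| ≤ δ := by
      rintro (j | k) i
      · exact hδ i j
      · simp only [A, Sum.elim_inr]
        split_ifs
        · simpa using hδ1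
        · simpa using hδ0
    have hc : ∀ j, |(Sum.elim d (fun _ : Fin m => (0 : ℝ))) j| ≤ ⨆ i, |d i| := by
      rintro (j | k)
      · exact hsup j
      · simpa using hsup0
    have key := integrality_gap A hδ0 hA (Sum.elim d (fun _ => 0)) hsup0 hc (Set.range Sum.inr)
      (Sum.elim yh (fun i => -(g x i : ℝ) - ∑ j, (D i j : ℝ) * yh j))
      (Sum.elim z (fun i => -(g x i) - ∑ j, D i j * z j)) ?_ ?_ ?_ ?_
    · simp only [Fintype.sum_sum_type, Sum.elim_inl, Sum.elim_inr, zero_mul,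
        Finset.sum_const_zero, add_zero] at key
      have e1 : d ⬝ᵥ yh = ∑ j, d j * yh j := rfl
      have e2 : d ⬝ᵥ y = ∑ j, d j * (z j : ℝ) := by rw [hzR]; rfl
      rw [e1, e2]
      have hle : ((m : ℝ) + 1) * (2 * m * δ + 1) ^ m ≤ 2 * m * (2 * m * δ + 1) ^ m := by
        gcongr
        linarith
      have := mul_le_mul_of_nonneg_left hle hsup0
      linarith
    · rintro _ ⟨i, rfl⟩
      have := hyhP i
      simp only [Sum.elim_inr]
      linarith
    · rintro _ ⟨i, rfl⟩
      have h1 := hyP i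
      simp only [hzR] at h1
      have h2 : g x i + ∑ j, D i j * z j ≤ 0 := by exact_mod_cast h1
      simp only [Sum.elim_inr]
      linarith
    · intro i
      simp [A, Fintype.sum_sum_type, mul_comm]
    · intro z' hz'0 hz'
      let v : Fin ny → ℝ := fun j => (z' (Sum.inl j) : ℝ)
      have hv := hyopt v ((hIsInt v).2 fun j => ⟨_, rfl⟩) ?_
      · simp only [Fintype.sum_sum_type, Sum.elim_inl, Sum.elim_inr, zero_mul,
          Finset.sum_const_zero, add_zero]
        rw [hzR] at hv
        exact hv
      · rw [hP, Set.mem_ofPred_eq]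
        intro i
        have h1 := hz' i
        have h2 := hz'0 (Sum.inr i) ⟨i, rfl⟩
        simp only [A, Fintype.sum_sum_type, Sum.elim_inl, Sum.elim_inr, mul_ite, mul_one,
          mul_zero, Finset.sum_ite_eq', Finset.mem_univ, if_true] at h1
        have h3 : ∑ j, D i j * z' (Sum.inl j) = ∑ j, z' (Sum.inl j) * D i j :=
          Finset.sum_congr rfl fun j _ => mul_comm _ _
        have h4 : ∑ j, D i j * z j = ∑ j, z j * D i j :=
          Finset.sum_congr rfl fun j _ => mul_comm _ _
        have h5 : g x i + ∑ j, D i j * z' (Sum.inl j) ≤ 0 := by linarith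
        simp only [mulVec, dotProduct, map_apply, v]
        exact_mod_cast h5
end

section
/- Intermediate bound in the integer-linear follower analysis: the optimal value of the follower-relaxed problem is at most the bilevel optimum plus ‖d‖₁·n_y·Δ(D); precisely, for every x ∈ X and every maximizer y of dᵀy over P(x) ∩ ℤ^{n_y}, h(x*) + dᵀŷ* ≤ h(x) + dᵀy + ‖d‖₁·n_y·Δ(D). -/
/-!
Fix `x`, let `y` be an optimal integer point of `P x` and `ŷ` an optimal point of `P x`. It suffices
to bound `dᵀŷ - dᵀy` by `‖d‖₁ * n_y * Δ`, the argument being that of Cook, Gerards, Schrijver and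
Tardos.

Let `A` be `D` with the identity matrix appended, and consider the cone of all `u` such that every
row of `A` has on `u` a sign compatible with its sign on `v = ŷ - y` (`RowConformal`). The identity rows
make this cone pointed. Repeatedly subtracting the largest admissible multiple of an extreme ray
drops the dimension of the space cut out by the rows vanishing at `v` (`tightSpace`), so `v` is a
nonnegative combination `∑ λ_j u_j` of at most `n_y` extreme directions (`conformal_decomposition`).
By Cramer's rule each extreme direction can be taken integral, its entries being subdeterminants of
`A` (`integral_ray`), hence bounded by `Δ` (`abs_det_fromRows_one_le`).

Conformality makes `y + ∑ ⌊λ_j⌋ u_j` an integer point of `P x`, so optimality of `y` gives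
`∑ ⌊λ_j⌋ dᵀu_j ≤ 0` and therefore
`dᵀŷ - dᵀy ≤ ∑ (λ_j - ⌊λ_j⌋) dᵀu_j ≤ n_y * ‖d‖₁ * Δ`.
The entry bound needs `1 ≤ Δ`, which can only fail for `D = 0`; then boundedness of the relaxation
forces `d = 0`.
-/

open Matrix BigOperators

/-! ### RowConformal vectors and tight spaces -/

/-- `u` is conformal to `v` with respect to the rows of `A`: no row takes opposite signs on `u` and
`v`, and every row vanishing on `v` vanishes on `u`. -/
def RowConformal {ι : Type*} {n : ℕ} (A : Matrix ι (Fin n) ℝ) (u v : Fin n → ℝ) : Prop :=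
  ∀ i, 0 ≤ (A *ᵥ u) i * (A *ᵥ v) i ∧ ((A *ᵥ v) i = 0 → (A *ᵥ u) i = 0)

/-- The subspace cut out by the rows of `A` that vanish on `v`. -/
noncomputable def tightSpace {ι : Type*} {n : ℕ} (A : Matrix ι (Fin n) ℝ) (v : Fin n → ℝ) :
    Submodule ℝ (Fin n → ℝ) :=
  LinearMap.ker (A.submatrix (Subtype.val : {i // (A *ᵥ v) i = 0} → ι) id).mulVecLin

theorem mem_tightSpace {ι : Type*} {n : ℕ} {A : Matrix ι (Fin n) ℝ} {v w : Fin n → ℝ} :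
    w ∈ tightSpace A v ↔ ∀ i, (A *ᵥ v) i = 0 → (A *ᵥ w) i = 0 := by
  rw [tightSpace, LinearMap.mem_ker, funext_iff]
  constructor
  · intro h i hi
    exact h ⟨i, hi⟩
  · intro h i
    exact h i.1 i.2

theorem self_mem_tightSpace {ι : Type*} {n : ℕ} (A : Matrix ι (Fin n) ℝ) (v : Fin n → ℝ) :
    v ∈ tightSpace A v := mem_tightSpace.2 fun _ h => h

theorem RowConformal.refl {ι : Type*} {n : ℕ} (A : Matrix ι (Fin n) ℝ) (v : Fin n → ℝ) :
    RowConformal A v v := fun _ => ⟨mul_self_nonneg _, id⟩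

theorem RowConformal.trans {ι : Type*} {n : ℕ} {A : Matrix ι (Fin n) ℝ} {u v w : Fin n → ℝ}
    (huv : RowConformal A u v) (hvw : RowConformal A v w) : RowConformal A u w := by
  intro i
  refine ⟨?_, fun h => (huv i).2 ((hvw i).2 h)⟩
  by_cases hv : (A *ᵥ v) i = 0
  · simp [(huv i).2 hv]
  · have h1 := mul_nonneg (huv i).1 (hvw i).1
    have h2 : 0 < (A *ᵥ v) i * (A *ᵥ v) i := mul_self_pos.2 hv
    by_contra! h3
    nlinarith [mul_neg_of_neg_of_pos h3 h2]

/-- A conformal vector at which some further row vanishes has a strictly smaller tight space. -/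
theorem finrank_tightSpace_lt {ι : Type*} {n : ℕ} {A : Matrix ι (Fin n) ℝ} {u v : Fin n → ℝ}
    (h : RowConformal A u v) {i : ι} (hv : (A *ᵥ v) i ≠ 0) (hu : (A *ᵥ u) i = 0) :
    Module.finrank ℝ (tightSpace A u) < Module.finrank ℝ (tightSpace A v) := by
  apply Submodule.finrank_lt_finrank_of_lt
  refine lt_of_le_of_ne ?_ ?_
  · intro w hw
    rw [mem_tightSpace] at hw ⊢
    exact fun j hj => hw j ((h j).2 hj)
  · intro heq
    have := self_mem_tightSpace A v
    rw [← heq, mem_tightSpace] at this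
    exact hv (this i hu)

/-- Moving from `v` in a direction of its tight space along which some row decreases in absolute
value, one stops at the first moment a new row vanishes. -/
theorem exists_conformal_step {ι : Type*} [Fintype ι] {n : ℕ} {A : Matrix ι (Fin n) ℝ}
    {v w : Fin n → ℝ} (hw : w ∈ tightSpace A v)
    (hneg : ∃ i, (A *ᵥ v) i * (A *ᵥ w) i < 0) :
    ∃ t : ℝ, 0 < t ∧ RowConformal A (v + t • w) v ∧
      ∃ i, (A *ᵥ v) i ≠ 0 ∧ (A *ᵥ (v + t • w)) i = 0 := by
  classical
  let S : Finset ι := Finset.univ.filter fun i => (A *ᵥ v) i * (A *ᵥ w) i < 0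
  have hS : S.Nonempty := by
    obtain ⟨i, hi⟩ := hneg
    exact ⟨i, by simp [S, hi]⟩
  obtain ⟨i, hiS, hmin⟩ := S.exists_min_image (fun i => -(A *ᵥ v) i / (A *ᵥ w) i) hS
  have hi : (A *ᵥ v) i * (A *ᵥ w) i < 0 := by simpa [S] using hiS
  have hv0 : (A *ᵥ v) i ≠ 0 := fun h => by simp [h] at hi
  have hw0 : (A *ᵥ w) i ≠ 0 := fun h => by simp [h] at hi
  have key : ∀ j, (A *ᵥ v) j * (A *ᵥ w) j < 0 →
      -(A *ᵥ v) j / (A *ᵥ w) j = ((A *ᵥ v) j * (A *ᵥ v) j) / -((A *ᵥ v) j * (A *ᵥ w) j) := by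
    intro j hj
    have h1 : (A *ᵥ v) j ≠ 0 := fun h => by simp [h] at hj
    have h2 : (A *ᵥ w) j ≠ 0 := fun h => by simp [h] at hj
    field_simp
  set t : ℝ := -(A *ᵥ v) i / (A *ᵥ w) i with ht
  have htpos : 0 < t := by
    rw [ht, key i hi]
    exact div_pos (mul_self_pos.2 hv0) (by linarith)
  refine ⟨t, htpos, ?_, i, hv0, ?_⟩
  · intro j
    simp only [mulVec_add, mulVec_smul, Pi.add_apply, Pi.smul_apply, smul_eq_mul]
    refine ⟨?_, fun h => by rw [h, mem_tightSpace.1 hw j h]; simp⟩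
    by_cases hj : (A *ᵥ v) j * (A *ᵥ w) j < 0
    · have h1 : t ≤ -(A *ᵥ v) j / (A *ᵥ w) j := hmin j (by simp [S, hj])
      rw [key j hj, le_div_iff₀ (by linarith)] at h1
      nlinarith
    · have h1 := mul_nonneg htpos.le (not_lt.1 hj)
      nlinarith [mul_self_nonneg ((A *ᵥ v) j)]
  · simp only [mulVec_add, mulVec_smul, Pi.add_apply, Pi.smul_apply, smul_eq_mul]
    rw [ht]
    field_simp
    ring

/-- The conformal cone of a nonzero `v` contains an extreme ray: as long as the tight space is not a
line, a direction in it independent of `v` leads to a nonzero point with a smaller tight space. -/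
theorem exists_conformal_ray {ι : Type*} [Fintype ι] {n : ℕ} {A : Matrix ι (Fin n) ℝ}
    (hA : Function.Injective A.mulVec) (k : ℕ) :
    ∀ v : Fin n → ℝ, Module.finrank ℝ (tightSpace A v) ≤ k → v ≠ 0 →
      ∃ u, u ≠ 0 ∧ RowConformal A u v ∧ Module.finrank ℝ (tightSpace A u) = 1 := by
  induction k with
  | zero =>
    intro v hk hv
    have := Submodule.finrank_eq_zero.1 (Nat.le_zero.1 hk)
    have h2 := self_mem_tightSpace A v
    rw [this, Submodule.mem_bot] at h2
    exact absurd h2 hv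
  | succ k ih =>
    intro v hk hv
    by_cases h1 : Module.finrank ℝ (tightSpace A v) = 1
    · exact ⟨v, hv, RowConformal.refl A v, h1⟩
    have hne : (⟨v, self_mem_tightSpace A v⟩ : tightSpace A v) ≠ 0 := by
      simpa [Subtype.ext_iff] using hv
    rw [finrank_eq_one_iff_of_nonzero' _ hne] at h1
    push Not at h1
    obtain ⟨⟨w, hw⟩, hwv⟩ := h1
    have hwv' : ∀ c : ℝ, c • v ≠ w := fun c hc => hwv c (Subtype.ext hc)
    have hw0 : w ≠ 0 := fun h => hwv' 0 (by simp [h])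
    obtain ⟨i, hi⟩ : ∃ i, (A *ᵥ w) i ≠ 0 := by
      by_contra! h
      exact hw0 (hA (by rw [mulVec_zero]; exact funext h))
    have hvi : (A *ᵥ v) i ≠ 0 := fun h => hi (mem_tightSpace.1 hw i h)
    -- up to replacing `w` by `-w`, row `i` decreases in absolute value along `w`
    obtain ⟨w', hw', hneg, hind⟩ : ∃ w' ∈ tightSpace A v, (A *ᵥ v) i * (A *ᵥ w') i < 0 ∧
        ∀ c : ℝ, c • v ≠ w' := by
      rcases lt_or_gt_of_ne (mul_ne_zero hvi hi) with h | h
      · exact ⟨w, hw, h, hwv'⟩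
      · refine ⟨-w, neg_mem hw, ?_, fun c hc => hwv' (-c) ?_⟩
        · simp only [mulVec_neg, Pi.neg_apply]
          linarith
        · rw [neg_smul, hc, neg_neg]
    obtain ⟨t, ht, hconf, j, hj, hj'⟩ := exists_conformal_step hw' ⟨i, hneg⟩
    have hlt := finrank_tightSpace_lt hconf hj hj'
    have hnz : v + t • w' ≠ 0 := by
      intro h
      apply hind (-t⁻¹)
      have h2 : v = -(t • w') := eq_neg_of_add_eq_zero_left h
      rw [h2, neg_smul_neg, smul_smul, inv_mul_cancel₀ ht.ne', one_smul]
    obtain ⟨u, hu, huc, hu1⟩ := ih _ (by omega) hnz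
    exact ⟨u, hu, huc.trans hconf, hu1⟩

/-- If every extreme direction has a positive multiple satisfying `Q`, then any `v` is a nonnegative
combination of `k` conformal `Q`-vectors for every `k` at least the dimension of its tight space;
`Q 0` allows padding. -/
theorem conformal_decomposition {ι : Type*} [Fintype ι] {n : ℕ} {A : Matrix ι (Fin n) ℝ}
    (hA : Function.Injective A.mulVec) (Q : (Fin n → ℝ) → Prop) (hQ0 : Q 0)
    (hQ : ∀ u, u ≠ 0 → Module.finrank ℝ (tightSpace A u) = 1 → ∃ c : ℝ, 0 < c ∧ Q (c • u))
    (k : ℕ) :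
    ∀ v : Fin n → ℝ, Module.finrank ℝ (tightSpace A v) ≤ k →
      ∃ (u : Fin k → Fin n → ℝ) (l : Fin k → ℝ),
        (∀ j, 0 ≤ l j ∧ Q (u j) ∧ RowConformal A (u j) v) ∧ v = ∑ j, l j • u j := by
  induction k with
  | zero =>
    intro v hk
    have := Submodule.finrank_eq_zero.1 (Nat.le_zero.1 hk)
    have h2 := self_mem_tightSpace A v
    rw [this, Submodule.mem_bot] at h2
    exact ⟨0, 0, fun j => j.elim0, by simp [h2]⟩
  | succ k ih =>
    intro v hk
    by_cases hv : v = 0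
    · subst hv
      exact ⟨0, 0, fun j => ⟨le_rfl, hQ0, RowConformal.refl A 0⟩, by simp⟩
    obtain ⟨u, hu, huv, hu1⟩ := exists_conformal_ray hA _ v le_rfl hv
    obtain ⟨c, hc, hcu⟩ := hQ u hu hu1
    have hcuv : RowConformal A (c • u) v := by
      intro i
      simp only [mulVec_smul, Pi.smul_apply, smul_eq_mul, mul_assoc]
      exact ⟨mul_nonneg hc.le (huv i).1, fun h => by rw [(huv i).2 h, mul_zero]⟩
    have hcu0 : c • u ≠ 0 := smul_ne_zero hc.ne' hu
    generalize c • u = u' at hcu hcuv hcu0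
    obtain ⟨i, hi⟩ : ∃ i, (A *ᵥ u') i ≠ 0 := by
      by_contra! h
      exact hcu0 (hA (by rw [mulVec_zero]; exact funext h))
    have hvi : (A *ᵥ v) i ≠ 0 := fun h => hi ((hcuv i).2 h)
    have hneg : (A *ᵥ v) i * (A *ᵥ (-u')) i < 0 := by
      have := lt_of_le_of_ne (hcuv i).1 (mul_ne_zero hi hvi).symm
      simp only [mulVec_neg, Pi.neg_apply]
      linarith
    obtain ⟨t, ht, hconf, j, hj, hj'⟩ := exists_conformal_step
      (neg_mem (mem_tightSpace.2 fun i h => (hcuv i).2 h)) ⟨i, hneg⟩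
    have hlt := finrank_tightSpace_lt hconf hj hj'
    obtain ⟨U, l, hUl, hsum⟩ := ih (v + t • -u') (by omega)
    refine ⟨Fin.cons u' U, Fin.cons t l, ?_, ?_⟩
    · intro j
      refine Fin.cases ?_ (fun j => ?_) j
      · exact ⟨ht.le, hcu, hcuv⟩
      · exact ⟨(hUl j).1, (hUl j).2.1, (hUl j).2.2.trans hconf⟩
    · rw [Fin.sum_univ_succ]
      simp only [Fin.cons_zero, Fin.cons_succ]
      rw [← hsum]
      simp

/-! ### Integral extreme directions -/

/-- Expanding along identity rows, the subdeterminants of `D` with the identity appended are, up to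
sign, subdeterminants of `D`, or `0` or `1`. -/
theorem abs_det_fromRows_one_le {m n : ℕ} (D : Matrix (Fin m) (Fin n) ℤ) (Δ : ℝ) (h1 : 1 ≤ Δ)
    (hΔ : ∀ (k : ℕ), 0 < k → ∀ (ri : Fin k → Fin m) (ci : Fin k → Fin n),
      Function.Injective ri → Function.Injective ci →
      |(((D.submatrix ri ci).det : ℤ) : ℝ)| ≤ Δ) (k : ℕ) :
    ∀ (r : Fin k → Fin m ⊕ Fin n) (c : Fin k → Fin n), Function.Injective c →
      |((((fromRows D (1 : Matrix (Fin n) (Fin n) ℤ)).submatrix r c).det : ℤ) : ℝ)| ≤ Δ := by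
  induction k with
  | zero => intro r c _; simpa using h1
  | succ k ih =>
    intro r c hc
    by_cases hr : ∃ i j, r i = Sum.inr j
    · obtain ⟨i, j, hij⟩ := hr
      rw [det_succ_row _ i]
      have hrow : ∀ l, (fromRows D (1 : Matrix (Fin n) (Fin n) ℤ)).submatrix r c i l =
          if j = c l then 1 else 0 := by
        intro l
        simp [hij, one_apply]
      simp only [hrow]
      by_cases hj : ∃ l, j = c l
      · obtain ⟨l, rfl⟩ := hj
        rw [Finset.sum_eq_single l]
        · rw [submatrix_submatrix]
          have := ih (r ∘ i.succAbove) (c ∘ l.succAbove)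
            (hc.comp Fin.succAbove_right_injective)
          simpa [abs_mul] using this
        · intro b _ hb
          rw [if_neg fun h => hb (hc h).symm]
          simp
        · simp
      · push Not at hj
        simp only [hj, if_false, mul_zero, zero_mul, Finset.sum_const_zero, Int.cast_zero, abs_zero]
        linarith
    · push Not at hr
      have : ∀ i, ∃ a, r i = Sum.inl a := by
        intro i
        rcases h : r i with a | b
        · exact ⟨a, rfl⟩
        · exact absurd h (hr i b)
      choose r' hr' using this
      have hsub : (fromRows D (1 : Matrix (Fin n) (Fin n) ℤ)).submatrix r c = D.submatrix r' c := by
        ext a b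
        simp [hr']
      rw [hsub]
      by_cases hinj : Function.Injective r'
      · exact hΔ (k + 1) k.succ_pos r' c hinj hc
      · rw [Function.Injective] at hinj
        push Not at hinj
        obtain ⟨a, b, hab, hne⟩ := hinj
        rw [det_zero_of_row_eq hne (by ext l; simp [hab])]
        simp only [Int.cast_zero, abs_zero]
        linarith

/-- An extreme direction is proportional to the vector of signed maximal minors of a basis of its
tight rows. -/
theorem integral_ray {ι : Type*} [Fintype ι] {n : ℕ} (B : Matrix ι (Fin n) ℤ) (Δ : ℝ)
    (hB : ∀ (k : ℕ) (r : Fin k → ι) (c : Fin k → Fin n), Function.Injective c →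
      |(((B.submatrix r c).det : ℤ) : ℝ)| ≤ Δ)
    (u : Fin n → ℝ) (hu : u ≠ 0)
    (h1 : Module.finrank ℝ (tightSpace (B.map (Int.cast : ℤ → ℝ)) u) = 1) :
    ∃ c : ℝ, 0 < c ∧ ∀ j, (∃ w : ℤ, (c • u) j = w) ∧ |(c • u) j| ≤ Δ := by
  classical
  cases n with
  | zero => exact absurd (Subsingleton.elim u 0) hu
  | succ p =>
  set A := B.map (Int.cast : ℤ → ℝ) with hA
  let M := A.submatrix (Subtype.val : {i // (A *ᵥ u) i = 0} → ι) id
  have hrank : Module.finrank ℝ (Submodule.span ℝ (Set.range M.row)) = p := by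
    have h2 := LinearMap.finrank_range_add_finrank_ker M.mulVecLin
    rw [← rank_eq_finrank_span_row]
    have h3 : Module.finrank ℝ (LinearMap.ker M.mulVecLin) = 1 := h1
    have h4 : M.rank = Module.finrank ℝ (LinearMap.range M.mulVecLin) := rfl
    simp at h2
    omega
  have hex := Submodule.exists_fun_fin_finrank_span_eq ℝ (Set.range M.row)
  rw [hrank] at hex
  obtain ⟨f, hf, hspan, hli⟩ := hex
  choose r hr using hf
  let w : Fin (p + 1) → ℤ := fun j =>
    (-1) ^ (j : ℕ) * (B.submatrix (fun i => (r i).1) j.succAbove).det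
  have hdet : ∀ x : Fin (p + 1) → ℝ, x ⬝ᵥ (fun j => (w j : ℝ)) =
      det (Matrix.of (Fin.cons x f : Fin (p + 1) → Fin (p + 1) → ℝ)) := by
    intro x
    rw [det_succ_row_zero, dotProduct]
    refine Finset.sum_congr rfl fun j _ => ?_
    have : (Matrix.of (Fin.cons x f : Fin (p + 1) → Fin (p + 1) → ℝ)).submatrix
        Fin.succ j.succAbove =
        (B.submatrix (fun i => (r i).1) j.succAbove).map (Int.cast : ℤ → ℝ) := by
      ext a b
      simp [← hr, M, hA, Matrix.row]
    rw [this, ← Int.cast_det]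
    simp only [w, of_apply, Fin.cons_zero]
    push_cast
    ring
  have hall : ∀ z : Fin (p + 1) → ℝ, (∀ i, f i ⬝ᵥ z = 0) →
      ∀ x ∈ Submodule.span ℝ (Set.range f), x ⬝ᵥ z = 0 := by
    intro z hz x hx
    induction hx using Submodule.span_induction with
    | mem x hx => obtain ⟨i, rfl⟩ := hx; exact hz i
    | zero => simp
    | add x y _ _ hx hy => rw [add_dotProduct, hx, hy, add_zero]
    | smul a x _ hx => rw [smul_dotProduct, hx, smul_zero]
  have hwf : ∀ i, f i ⬝ᵥ (fun j => (w j : ℝ)) = 0 := by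
    intro i
    rw [hdet]
    exact det_zero_of_row_eq (Fin.succ_ne_zero i).symm rfl
  have huf : ∀ i, f i ⬝ᵥ u = 0 := by
    intro i
    rw [← hr]
    exact (r i).2
  have huspan : u ∉ Submodule.span ℝ (Set.range f) := fun h =>
    hu (dotProduct_self_eq_zero.1 (hall u huf u h))
  -- `u` is orthogonal to the chosen rows, so it completes them to a basis
  have hne : u ⬝ᵥ (fun j => (w j : ℝ)) ≠ 0 := by
    rw [hdet]
    have h2 := linearIndependent_finCons.2 ⟨hli, huspan⟩
    have h3 : IsUnit (Matrix.of (Fin.cons u f : Fin (p + 1) → Fin (p + 1) → ℝ)) :=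
      linearIndependent_rows_iff_isUnit.1 h2
    exact ((isUnit_iff_isUnit_det _).1 h3).ne_zero
  have hwt : (fun j => (w j : ℝ)) ∈ tightSpace A u := by
    rw [mem_tightSpace]
    intro i hi
    refine hall _ hwf (A i) ?_
    rw [hspan]
    exact Submodule.subset_span ⟨⟨i, hi⟩, rfl⟩
  have hu' : (⟨u, self_mem_tightSpace A u⟩ : tightSpace A u) ≠ 0 := by
    simpa [Subtype.ext_iff] using hu
  obtain ⟨c, hc⟩ := (finrank_eq_one_iff_of_nonzero' _ hu').1 h1 ⟨_, hwt⟩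
  have hc : c • u = fun j => (w j : ℝ) := congrArg Subtype.val hc
  have hwb : ∀ j, |(w j : ℝ)| ≤ Δ := by
    intro j
    have := hB p (fun i => (r i).1) j.succAbove Fin.succAbove_right_injective
    simpa [w, abs_mul] using this
  have hc0 : c ≠ 0 := by
    rintro rfl
    rw [← hc] at hne
    simp at hne
  rcases lt_or_gt_of_ne hc0 with h | h
  · refine ⟨-c, by linarith, fun j => ?_⟩
    have : (-c • u) j = -(w j : ℝ) := by rw [neg_smul, hc]; rfl
    rw [this, abs_neg]
    exact ⟨⟨-w j, by simp⟩, hwb j⟩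
  · refine ⟨c, h, fun j => ?_⟩
    rw [hc]
    exact ⟨⟨w j, rfl⟩, hwb j⟩

/-! ### Rounding -/

/-- The integrality gap bound: rounding down the coefficients of a conformal decomposition of
`yh - y` yields an integer feasible point. -/
theorem integrality_gap_s7 {m n : ℕ} (D : Matrix (Fin m) (Fin n) ℤ) (d : Fin n → ℝ)
    (g : Fin m → ℝ) (Δ : ℝ) (h1 : 1 ≤ Δ)
    (hΔ : ∀ (k : ℕ), 0 < k → ∀ (ri : Fin k → Fin m) (ci : Fin k → Fin n),
      Function.Injective ri → Function.Injective ci →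
      |(((D.submatrix ri ci).det : ℤ) : ℝ)| ≤ Δ)
    (y yh : Fin n → ℝ) (hyint : ∀ i, ∃ w : ℤ, y i = w)
    (hy : ∀ i, g i + (D.map (Int.cast : ℤ → ℝ)).mulVec y i ≤ 0)
    (hyh : ∀ i, g i + (D.map (Int.cast : ℤ → ℝ)).mulVec yh i ≤ 0)
    (hopt : ∀ z : Fin n → ℝ, (∀ i, ∃ w : ℤ, z i = w) →
      (∀ i, g i + (D.map (Int.cast : ℤ → ℝ)).mulVec z i ≤ 0) → d ⬝ᵥ z ≤ d ⬝ᵥ y) :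
    d ⬝ᵥ yh ≤ d ⬝ᵥ y + (∑ i, |d i|) * n * Δ := by
  set B := fromRows D (1 : Matrix (Fin n) (Fin n) ℤ) with hB
  set A := B.map (Int.cast : ℤ → ℝ) with hA
  set E := D.map (Int.cast : ℤ → ℝ) with hE
  have hAl : ∀ v i, (A *ᵥ v) (Sum.inl i) = (E *ᵥ v) i := fun v i => rfl
  have hAr : ∀ v i, (A *ᵥ v) (Sum.inr i) = v i := by
    intro v i
    have : (A *ᵥ v) (Sum.inr i) =
        (((1 : Matrix (Fin n) (Fin n) ℤ).map (Int.cast : ℤ → ℝ)) *ᵥ v) i := rfl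
    rw [this, Matrix.map_one _ Int.cast_zero Int.cast_one, one_mulVec]
  have hinj : Function.Injective A.mulVec := by
    intro v w hvw
    ext i
    rw [← hAr v i, ← hAr w i, hvw]
  obtain ⟨u, l, hul, hsum⟩ := conformal_decomposition hinj
    (fun u => ∀ j, (∃ w : ℤ, u j = w) ∧ |u j| ≤ Δ)
    (fun j => ⟨⟨0, by simp⟩, by simp; linarith⟩)
    (fun u hu hu1 => integral_ray B Δ (abs_det_fromRows_one_le D Δ h1 hΔ) u hu hu1)
    n (yh - y) (by
      have := Submodule.finrank_le (tightSpace A (yh - y))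
      simpa using this)
  have hmul : ∀ (a : Fin n → ℝ) i, (E *ᵥ (∑ j, a j • u j)) i = ∑ j, a j * (E *ᵥ u j) i := by
    intro a i
    simp [mulVec_sum, mulVec_smul]
  have hdot : ∀ (a : Fin n → ℝ), d ⬝ᵥ (∑ j, a j • u j) = ∑ j, a j * (d ⬝ᵥ u j) := by
    intro a
    simp [dotProduct_sum]
  have hz := hopt (y + ∑ j, ((⌊l j⌋ : ℤ) : ℝ) • u j) ?_ ?_
  · rw [dotProduct_add, hdot] at hz
    have hyh' : d ⬝ᵥ yh = d ⬝ᵥ y + ∑ j, l j * (d ⬝ᵥ u j) := by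
      rw [← hdot, ← hsum, dotProduct_sub]; ring
    have hfr : ∑ j, (l j - ⌊l j⌋) * (d ⬝ᵥ u j) ≤ ∑ _j : Fin n, (∑ i, |d i|) * Δ := by
      refine Finset.sum_le_sum fun j _ => ?_
      have hb : d ⬝ᵥ u j ≤ (∑ i, |d i|) * Δ := by
        rw [dotProduct, Finset.sum_mul]
        refine Finset.sum_le_sum fun i _ => ?_
        calc d i * u j i ≤ |d i * u j i| := le_abs_self _
          _ = |d i| * |u j i| := abs_mul _ _
          _ ≤ |d i| * Δ := mul_le_mul_of_nonneg_left ((hul j).2.1 i).2 (abs_nonneg _)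
      have hnn : 0 ≤ (∑ i, |d i|) * Δ :=
        mul_nonneg (Finset.sum_nonneg fun i _ => abs_nonneg _) (by linarith)
      have hf0 : 0 ≤ l j - ⌊l j⌋ := Int.fract_nonneg (l j)
      have hf1 : l j - ⌊l j⌋ ≤ 1 := (Int.fract_lt_one (l j)).le
      nlinarith [mul_le_mul_of_nonneg_left hb hf0]
    simp only [sub_mul, Finset.sum_sub_distrib, Finset.sum_const, Finset.card_univ,
      Fintype.card_fin, nsmul_eq_mul] at hfr
    rw [hyh']
    nlinarith
  · intro i
    obtain ⟨a, ha⟩ := hyint i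
    have : ∀ j, ∃ w : ℤ, u j i = w := fun j => ((hul j).2.1 i).1
    choose b hb using this
    refine ⟨a + ∑ j, ⌊l j⌋ * b j, ?_⟩
    simp [ha, hb]
  · intro i
    rw [mulVec_add, Pi.add_apply, hmul]
    have hs : (E *ᵥ yh) i - (E *ᵥ y) i = ∑ j, l j * (E *ᵥ u j) i := by
      rw [← hmul, ← hsum, mulVec_sub]; rfl
    have hc := fun j => (hul j).2.2 (Sum.inl i)
    simp only [hAl, mulVec_sub, Pi.sub_apply] at hc
    rcases le_or_gt ((E *ᵥ yh) i - (E *ᵥ y) i) 0 with h | h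
    · have : ∑ j, (⌊l j⌋ : ℝ) * (E *ᵥ u j) i ≤ 0 := by
        refine Finset.sum_nonpos fun j _ => ?_
        have hfl : (0 : ℝ) ≤ ⌊l j⌋ := by exact_mod_cast Int.floor_nonneg.2 (hul j).1
        refine mul_nonpos_of_nonneg_of_nonpos hfl ?_
        rcases h.lt_or_eq with h | h
        · exact nonpos_of_mul_nonneg_left (hc j).1 h
        · exact ((hc j).2 h).le
      linarith [hy i]
    · have : ∑ j, (⌊l j⌋ : ℝ) * (E *ᵥ u j) i ≤ ∑ j, l j * (E *ᵥ u j) i := by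
        refine Finset.sum_le_sum fun j _ => ?_
        exact mul_le_mul_of_nonneg_right (Int.floor_le _)
          (nonneg_of_mul_nonneg_left (hc j).1 h)
      linarith [hyh i]

/-- Intermediate bound in the integer-linear follower analysis: the optimal
value of the follower-relaxed problem is at most the bilevel optimum plus
`‖d‖₁ * n_y * Δ(D)`; precisely, for every leader decision `x` and every
maximizer `y` of `dᵀy` over `P(x) ∩ ℤ^{n_y}`,
`h x* + dᵀŷ* ≤ h x + dᵀy + ‖d‖₁ * n_y * Δ(D)`. -/
theorem FRV_value_le_bilevel_optimum_add_linear_prox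
    (nx ny m : ℕ) (hnx : 0 < nx) (hny : 0 < ny) (hm : 0 < m)
    -- leader's decisions
    (X : Type) (hX : Nonempty X)
    (h : X → ℝ)
    -- follower's (and leader's, negated) linear objective
    (d : Fin ny → ℝ)
    -- follower's constraint data: integral matrix `D`, integer-valued `g`
    (D : Matrix (Fin m) (Fin ny) ℤ)
    (g : X → Fin m → ℤ)
    -- follower's relaxed feasible set `P x = {y | g x + D y ≤ 0}`
    (P : X → Set (Fin ny → ℝ))
    (hP : ∀ x, P x = {y : Fin ny → ℝ |
      ∀ i, (g x i : ℝ) + (D.map (Int.cast : ℤ → ℝ)).mulVec y i ≤ 0})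
    -- integrality predicate
    (IsInt : (Fin ny → ℝ) → Prop)
    (hIsInt : ∀ y, IsInt y ↔ ∀ i, ∃ w : ℤ, y i = (w : ℝ))
    -- for every `x`, the integer feasible set is nonempty and both the relaxed
    -- and the integer linear program attain finite maxima
    (hfeas : ∀ x : X, ∃ y, IsInt y ∧ y ∈ P x)
    (hmaxR : ∀ x : X, ∃ yh ∈ P x, ∀ y ∈ P x, d ⬝ᵥ y ≤ d ⬝ᵥ yh)
    (hmaxZ : ∀ x : X, ∃ yt, IsInt yt ∧ yt ∈ P x ∧
      ∀ y, IsInt y → y ∈ P x → d ⬝ᵥ y ≤ d ⬝ᵥ yt)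
    -- `Δ` bounds the absolute value of every (nonempty) subdeterminant of `D`
    (Δ : ℝ)
    (hΔ : ∀ (k : ℕ), 0 < k → ∀ (ri : Fin k → Fin m) (ci : Fin k → Fin ny),
      Function.Injective ri → Function.Injective ci →
      |(((D.submatrix ri ci).det : ℤ) : ℝ)| ≤ Δ)
    -- `x*, ŷ*` solve the follower-relaxed bilevel problem
    (xstar : X) (yhstar : Fin ny → ℝ)
    (hyhstar : yhstar ∈ P xstar ∧ ∀ y ∈ P xstar, d ⬝ᵥ y ≤ d ⬝ᵥ yhstar)
    (hleaderopt : ∀ x : X, ∀ yh ∈ P x, (∀ y ∈ P x, d ⬝ᵥ y ≤ d ⬝ᵥ yh) →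
      h xstar + d ⬝ᵥ yhstar ≤ h x + d ⬝ᵥ yh) :
    ∀ x : X, ∀ y : Fin ny → ℝ, IsInt y → y ∈ P x →
      (∀ z, IsInt z → z ∈ P x → d ⬝ᵥ z ≤ d ⬝ᵥ y) →
      h xstar + d ⬝ᵥ yhstar ≤ h x + d ⬝ᵥ y + (∑ i, |d i|) * ny * Δ := by
  intro x y hyint hyP hyopt
  obtain ⟨yh, hyhP, hyhopt⟩ := hmaxR x
  have hlead := hleaderopt x yh hyhP hyhopt
  suffices d ⬝ᵥ yh ≤ d ⬝ᵥ y + (∑ i, |d i|) * ny * Δ by linarith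
  by_cases hD : D = 0
  · -- every direction is feasible, so boundedness of the relaxation forces `d = 0`
    have hmem : yh + d ∈ P x := by
      rw [hP] at hyhP ⊢
      intro i
      have := hyhP i
      simpa [hD] using this
    have h1 := hyhopt _ hmem
    rw [dotProduct_add] at h1
    have h2 : d ⬝ᵥ d = 0 := le_antisymm (by linarith)
      (Finset.sum_nonneg fun i _ => mul_self_nonneg _)
    have h3 : d = 0 := dotProduct_self_eq_zero.1 h2
    simp [h3]
  · obtain ⟨i, j, hij⟩ : ∃ i j, D i j ≠ 0 := by
      by_contra! hcon
      exact hD (by ext i j; exact hcon i j)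
    have h1 : 1 ≤ Δ := by
      have h2 := hΔ 1 one_pos (fun _ => i) (fun _ => j)
        (Function.injective_of_subsingleton _) (Function.injective_of_subsingleton _)
      rw [det_unique] at h2
      have h3 : (1 : ℝ) ≤ |((D i j : ℤ) : ℝ)| := by exact_mod_cast Int.one_le_abs hij
      exact h3.trans h2
    rw [hP] at hyP hyhP
    refine integrality_gap_s7 D d (fun i => (g x i : ℝ)) Δ h1 hΔ y yh ((hIsInt y).1 hyint)
      hyP hyhP fun z hz hzP => hyopt z ((hIsInt z).2 hz) ?_
    rw [hP]
    exact hzP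
end
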